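/- arXiv:math/0510170 — 7 statements merged into one kernel-verified Lean document; each statement's English description precedes it below -/
import Mathlib

section
/- Let n ≥ 2. The normalizer in SL(n+1,ℝ) of the subgroup H₁ = {diag(1,h) : h ∈ SL(n,ℝ)} equals the subgroup G^σ = {diag((det h)⁻¹, h) : h ∈ GL(n,ℝ)} of block-diagonal matrices. -/
/-!
If `g` normalizes `H₁`, then for each `x ∈ H₁` there is `y ∈ H₁` with `g x = y g`. Left
multiplication by `y = diag(1, k)` fixes the top row of `g`, so the off-corner part of that row is
a row vector fixed by all of `SL(n, ℝ)`; testing against the transvections `1 + E i j`, which exist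
because `n ≥ 2`, shows it is zero (`row_eq_zero`). Dually the first column vanishes off the corner
(`col_eq_zero`), so `g` is block diagonal, and `det g = 1` determines its corner entry. Conversely,
conjugating `diag(1, h)` by `diag((det k)⁻¹, k)` gives `diag(1, k h k⁻¹)`, and `G^σ` is closed
under inversion, so both directions of the normalizer condition hold.
-/

open Matrix

/-- The block-diagonal matrix `diag(a, h)` of size `(n+1) × (n+1)`, with `(1,1)`-entry `a`,
lower-right `n × n` block `h`, and zero off-diagonal blocks. -/
def diagBlock {n : ℕ} (a : ℝ) (h : Matrix (Fin n) (Fin n) ℝ) :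
    Matrix (Fin (n + 1)) (Fin (n + 1)) ℝ :=
  Matrix.of fun i j =>
    Fin.cases (Fin.cases a (fun _ => (0 : ℝ)) j)
      (fun i' => Fin.cases (0 : ℝ) (fun j' => h i' j') j) i

/-- The subgroup `H₁ = {diag(1, h) : h ∈ SL(n, ℝ)}` of `SL(n+1, ℝ)`, as a set. -/
def H1set (n : ℕ) : Set (Matrix.SpecialLinearGroup (Fin (n + 1)) ℝ) :=
  {g | ∃ h : Matrix.SpecialLinearGroup (Fin n) ℝ,
    (g : Matrix (Fin (n + 1)) (Fin (n + 1)) ℝ) = diagBlock 1 (h : Matrix (Fin n) (Fin n) ℝ)}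

/-- The subgroup `G^σ = {diag((det h)⁻¹, h) : h ∈ GL(n, ℝ)}` of `SL(n+1, ℝ)`, as a set. -/
def Gsigmaset (n : ℕ) : Set (Matrix.SpecialLinearGroup (Fin (n + 1)) ℝ) :=
  {g | ∃ h : Matrix (Fin n) (Fin n) ℝ, h.det ≠ 0 ∧
    (g : Matrix (Fin (n + 1)) (Fin (n + 1)) ℝ) = diagBlock (h.det)⁻¹ h}

lemma diagBlock_mul {n : ℕ} (a b : ℝ) (h k : Matrix (Fin n) (Fin n) ℝ) :
    diagBlock a h * diagBlock b k = diagBlock (a * b) (h * k) := by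
  ext i j
  refine Fin.cases ?_ (fun i => ?_) i <;> refine Fin.cases ?_ (fun j => ?_) j <;>
    simp [diagBlock, Matrix.mul_apply, Fin.sum_univ_succ]

lemma diagBlock_one {n : ℕ} : diagBlock 1 (1 : Matrix (Fin n) (Fin n) ℝ) = 1 := by
  ext i j
  refine Fin.cases ?_ (fun i => ?_) i <;> refine Fin.cases ?_ (fun j => ?_) j <;>
    simp [diagBlock, Matrix.one_apply, Fin.succ_ne_zero, (Fin.succ_ne_zero _).symm]

lemma det_diagBlock {n : ℕ} (a : ℝ) (h : Matrix (Fin n) (Fin n) ℝ) :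
    (diagBlock a h).det = a * h.det := by
  rw [Matrix.det_succ_row_zero, Fin.sum_univ_succ]
  have hs : (diagBlock a h).submatrix Fin.succ Fin.succ = h := by
    ext i j
    simp [diagBlock]
  simp [diagBlock] at hs ⊢
  simp [hs]

/-- Membership in `G^σ` only asks that the off-diagonal blocks vanish: the corner entry is then
forced by `det g = 1`. -/
lemma mem_Gsigmaset_of_offDiag {n : ℕ} (g : Matrix.SpecialLinearGroup (Fin (n + 1)) ℝ)
    (hr : ∀ j : Fin n, g.1 0 j.succ = 0) (hc : ∀ i : Fin n, g.1 i.succ 0 = 0) :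
    g ∈ Gsigmaset n := by
  have hg : g.1 = diagBlock (g.1 0 0) (g.1.submatrix Fin.succ Fin.succ) := by
    ext i j
    refine Fin.cases ?_ (fun i => ?_) i <;> refine Fin.cases ?_ (fun j => ?_) j <;>
      simp [diagBlock, hr, hc]
  have hd : g.1 0 0 * (g.1.submatrix Fin.succ Fin.succ).det = 1 := by
    rw [← det_diagBlock, ← hg, g.2]
  refine ⟨g.1.submatrix Fin.succ Fin.succ, right_ne_zero_of_mul_eq_one hd, ?_⟩
  rw [← eq_inv_of_mul_eq_one_left hd]
  exact hg

lemma coe_inv_of_eq_diagBlock {n : ℕ} {g : Matrix.SpecialLinearGroup (Fin (n + 1)) ℝ}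
    {k : Matrix (Fin n) (Fin n) ℝ} (hk : k.det ≠ 0) (hg : g.1 = diagBlock (k.det)⁻¹ k) :
    (g⁻¹).1 = diagBlock k.det k⁻¹ := by
  have h1 : g.1 * diagBlock k.det k⁻¹ = 1 := by
    rw [hg, diagBlock_mul, inv_mul_cancel₀ hk, Matrix.mul_nonsing_inv _ hk.isUnit, diagBlock_one]
  have h2 : (g⁻¹).1 * g.1 = 1 := congrArg Subtype.val (inv_mul_cancel g)
  exact left_inv_eq_right_inv h2 h1

lemma inv_mem_Gsigmaset {n : ℕ} {g : Matrix.SpecialLinearGroup (Fin (n + 1)) ℝ}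
    (hg : g ∈ Gsigmaset n) : g⁻¹ ∈ Gsigmaset n := by
  obtain ⟨k, hk, hg⟩ := hg
  have hdet : (k⁻¹).det = (k.det)⁻¹ := by
    rw [Matrix.det_nonsing_inv, Ring.inverse_eq_inv']
  refine ⟨k⁻¹, by simpa [hdet] using hk, ?_⟩
  rw [hdet, inv_inv]
  exact coe_inv_of_eq_diagBlock hk hg

lemma conj_mem_H1set {n : ℕ} {g x : Matrix.SpecialLinearGroup (Fin (n + 1)) ℝ}
    (hg : g ∈ Gsigmaset n) (hx : x ∈ H1set n) : g * x * g⁻¹ ∈ H1set n := by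
  obtain ⟨k, hk, hg⟩ := hg
  obtain ⟨h, hx⟩ := hx
  have hdet : (k * h.1 * k⁻¹).det = 1 := by
    rw [Matrix.det_mul, Matrix.det_mul, h.2, Matrix.det_nonsing_inv, Ring.inverse_eq_inv',
      mul_one, mul_inv_cancel₀ hk]
  refine ⟨⟨k * h.1 * k⁻¹, hdet⟩, ?_⟩
  change g.1 * x.1 * (g⁻¹).1 = _
  rw [coe_inv_of_eq_diagBlock hk hg, hg, hx, diagBlock_mul, diagBlock_mul, mul_one,
    inv_mul_cancel₀ hk]

/-- The unipotent elements of `H₁` used to test the normalizing condition: `diag(1, 1 + E i j)`. -/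
lemma exists_transvection_mem_H1set {n : ℕ} {i j : Fin n} (hij : i ≠ j) :
    ∃ x ∈ H1set n, x.1 = diagBlock 1 (Matrix.transvection i j (1 : ℝ)) :=
  ⟨⟨diagBlock 1 (Matrix.transvection i j 1), by
      rw [det_diagBlock, Matrix.det_transvection_of_ne i j hij, one_mul]⟩,
    ⟨⟨Matrix.transvection i j 1, Matrix.det_transvection_of_ne i j hij 1⟩, rfl⟩, rfl⟩

/-- Compare the entries `(0, j.succ)` of `g x = y g`: an element of `H₁` on the left fixes the top row,
while `x = diag(1, 1 + E i j)` adds the entry `(0, i.succ)` there. -/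
lemma row_eq_zero {n : ℕ} {g y x : Matrix.SpecialLinearGroup (Fin (n + 1)) ℝ} {i j : Fin n}
    (hx : x.1 = diagBlock 1 (Matrix.transvection i j (1 : ℝ))) (hy : y ∈ H1set n)
    (h : g * x = y * g) : g.1 0 i.succ = 0 := by
  obtain ⟨k, hy⟩ := hy
  have h' : g.1 * x.1 = y.1 * g.1 := congrArg Subtype.val h
  have e := congrFun (congrFun h' 0) j.succ
  rw [hx, hy] at e
  simpa [diagBlock, Matrix.mul_apply, Fin.sum_univ_succ, Matrix.transvection, Matrix.one_apply,
    Matrix.single_apply, mul_add, Finset.sum_add_distrib, ite_and] using e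

/-- The column counterpart of `row_eq_zero`, from the entries `(i.succ, 0)` of `x g = g y`. -/
lemma col_eq_zero {n : ℕ} {g y x : Matrix.SpecialLinearGroup (Fin (n + 1)) ℝ} {i j : Fin n}
    (hx : x.1 = diagBlock 1 (Matrix.transvection i j (1 : ℝ))) (hy : y ∈ H1set n)
    (h : x * g = g * y) : g.1 j.succ 0 = 0 := by
  obtain ⟨k, hy⟩ := hy
  have h' : x.1 * g.1 = g.1 * y.1 := congrArg Subtype.val h
  have e := congrFun (congrFun h' i.succ) 0
  rw [hx, hy] at e
  simpa [diagBlock, Matrix.mul_apply, Fin.sum_univ_succ, Matrix.transvection, Matrix.one_apply,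
    Matrix.single_apply, add_mul, Finset.sum_add_distrib, ite_and] using e

/-- for `n ≥ 2`, the normalizer of `H₁` in `SL(n+1, ℝ)` is `G^σ`. -/
theorem normalizer_H1_eq_Gsigma (n : ℕ) (hn : 2 ≤ n) :
    {g : Matrix.SpecialLinearGroup (Fin (n + 1)) ℝ |
        ∀ x : Matrix.SpecialLinearGroup (Fin (n + 1)) ℝ,
          x ∈ H1set n ↔ g * x * g⁻¹ ∈ H1set n} = Gsigmaset n := by
  have : Nontrivial (Fin n) := Fin.nontrivial_iff_two_le.mpr hn
  ext g
  constructor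
  · intro hg
    refine mem_Gsigmaset_of_offDiag g (fun i => ?_) (fun j => ?_)
    · obtain ⟨j, hj⟩ := exists_ne i
      obtain ⟨x, hxH, hx⟩ := exists_transvection_mem_H1set hj.symm
      exact row_eq_zero hx ((hg x).mp hxH) (by group)
    · obtain ⟨i, hi⟩ := exists_ne j
      obtain ⟨x, hxH, hx⟩ := exists_transvection_mem_H1set hi
      have hy : g⁻¹ * x * g ∈ H1set n := by
        refine (hg _).mpr ?_
        have e : g * (g⁻¹ * x * g) * g⁻¹ = x := by group
        rwa [e]
      exact col_eq_zero hx hy (by group)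
  · intro hg x
    refine ⟨conj_mem_H1set hg, fun hx => ?_⟩
    have h := conj_mem_H1set (inv_mem_Gsigmaset hg) hx
    have e : g⁻¹ * (g * x * g⁻¹) * g⁻¹⁻¹ = x := by group
    rwa [e] at h
end

section
/- Let n ≥ 2 and let c ∈ ℝ with c ≠ 0. The group SL(n,ℝ), acting on ℝⁿ × ℝⁿ by h·(u,v) = (h u, (hᵀ)⁻¹ v), acts transitively on the set {(u,v) ∈ ℝⁿ × ℝⁿ : ⟨u,v⟩ = c}. -/
open Matrix

/-!
The element `h` is a product of three rank-one perturbations `1 + a bᵀ` of the identity, whose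
determinants are `1 + ⟨b, a⟩`. A map `D` fixing `u` with prescribed determinant (a dilation along
some `z ⟂ u`, available since `n ≥ 2`) followed by an invertible map `H` taking `u` to `u'` shows
that `SL(n, ℝ)` is transitive on nonzero vectors (`exists_det_one_mulVec_eq`). Once `u` has been
moved to `u'`, the transvection `1 + c⁻¹ u' (w - v')ᵀ` fixes `u'`, and its transpose sends `v'` to
any `w` with `⟨u', w⟩ = c` (`exists_det_one_fix`).
-/

lemma det_one_add_vecMulVec {n : ℕ} (a b : Fin n → ℝ) :
    (1 + vecMulVec a b).det = 1 + b ⬝ᵥ a := by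
  rw [vecMulVec_eq Unit, det_one_add_replicateCol_mul_replicateRow]

lemma one_add_vecMulVec_mulVec {n : ℕ} (a b x : Fin n → ℝ) :
    (1 + vecMulVec a b) *ᵥ x = x + (b ⬝ᵥ x) • a := by
  rw [add_mulVec, one_mulVec, vecMulVec_mulVec]
  ext i
  simp

/-- If `⟨b, u⟩ = 1`, then `1 + (u' - u) bᵀ` sends `u` to `u'` and has determinant `⟨b, u'⟩`; a
suitable combination `b` of `u` and `u'` makes the latter nonzero. -/
lemma exists_det_ne_zero_mulVec_eq {n : ℕ} (u u' : Fin n → ℝ) (hu : u ≠ 0) (hu' : u' ≠ 0) :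
    ∃ H : Matrix (Fin n) (Fin n) ℝ, H.det ≠ 0 ∧ H *ᵥ u = u' := by
  have huu : u ⬝ᵥ u ≠ 0 := by simpa using hu
  have huu' : u' ⬝ᵥ u' ≠ 0 := by simpa using hu'
  obtain ⟨b, hb, hb'⟩ : ∃ b : Fin n → ℝ, b ⬝ᵥ u = 1 ∧ b ⬝ᵥ u' ≠ 0 := by
    by_cases h : u ⬝ᵥ u' = 0
    · refine ⟨(u ⬝ᵥ u)⁻¹ • (u + u'), ?_, ?_⟩
      · simp [add_dotProduct, dotProduct_comm u' u, h, huu]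
      · simp only [smul_dotProduct, add_dotProduct, h, zero_add, smul_eq_mul]
        exact mul_ne_zero (inv_ne_zero huu) huu'
    · refine ⟨(u ⬝ᵥ u)⁻¹ • u, ?_, ?_⟩
      · simp [huu]
      · simp only [smul_dotProduct, smul_eq_mul]
        exact mul_ne_zero (inv_ne_zero huu) h
  refine ⟨1 + vecMulVec (u' - u) b, ?_, ?_⟩
  · rw [det_one_add_vecMulVec, dotProduct_sub, hb]
    simpa using hb'
  · rw [one_add_vecMulVec_mulVec, hb]
    simp

lemma exists_det_one_mulVec_eq {n : ℕ} (hn : 2 ≤ n) (u u' : Fin n → ℝ) (hu : u ≠ 0)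
    (hu' : u' ≠ 0) : ∃ K : Matrix (Fin n) (Fin n) ℝ, K.det = 1 ∧ K *ᵥ u = u' := by
  obtain ⟨H, hH, hHu⟩ := exists_det_ne_zero_mulVec_eq u u' hu hu'
  have : Nontrivial (Fin n) := Fin.nontrivial_iff_two_le.2 hn
  obtain ⟨z, hz, hzu⟩ := exists_ne_zero_dotProduct_eq_zero u
  have hzz : z ⬝ᵥ z ≠ 0 := by simpa using hz
  -- The right factor fixes `u` and scales `z` by `(det H)⁻¹`.
  refine ⟨H * (1 + vecMulVec (((H.det)⁻¹ - 1) • (z ⬝ᵥ z)⁻¹ • z) z), ?_, ?_⟩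
  · rw [det_mul, det_one_add_vecMulVec]
    simp only [dotProduct_smul, smul_eq_mul]
    field_simp
    ring
  · rw [← mulVec_mulVec, one_add_vecMulVec_mulVec, hzu, zero_smul, add_zero, hHu]

/-- The stabilizer of `u` in `SL(n, ℝ)` is transitive on covectors pairing to `c` with `u`. -/
lemma exists_det_one_fix {n : ℕ} (c : ℝ) (hc : c ≠ 0) (u v w : Fin n → ℝ)
    (hv : u ⬝ᵥ v = c) (hw : u ⬝ᵥ w = c) :
    ∃ T : Matrix (Fin n) (Fin n) ℝ, T.det = 1 ∧ T *ᵥ u = u ∧ Tᵀ *ᵥ v = w := by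
  have h0 : (w - v) ⬝ᵥ u = 0 := by
    rw [dotProduct_comm, dotProduct_sub, hv, hw, sub_self]
  refine ⟨1 + vecMulVec (c⁻¹ • u) (w - v), ?_, ?_, ?_⟩
  · rw [det_one_add_vecMulVec, dotProduct_smul, h0, smul_zero, add_zero]
  · rw [one_add_vecMulVec_mulVec, h0, zero_smul, add_zero]
  · rw [transpose_add, transpose_one, transpose_vecMulVec, one_add_vecMulVec_mulVec,
      smul_dotProduct, hv, smul_eq_mul, inv_mul_cancel₀ hc, one_smul, add_sub_cancel]

/-- for `n ≥ 2` and `c ≠ 0`, the group `SL(n, ℝ)`, acting on `ℝⁿ × ℝⁿ` by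
`h · (u, v) = (h u, (hᵀ)⁻¹ v)`, acts transitively on `{(u, v) : ⟨u, v⟩ = c}`. -/
theorem sl_transitive_on_level_set (n : ℕ) (hn : 2 ≤ n) (c : ℝ) (hc : c ≠ 0)
    (u v u' v' : Fin n → ℝ) (huv : u ⬝ᵥ v = c) (huv' : u' ⬝ᵥ v' = c) :
    ∃ h : Matrix.SpecialLinearGroup (Fin n) ℝ,
      (h : Matrix (Fin n) (Fin n) ℝ) *ᵥ u = u' ∧
      ((h : Matrix (Fin n) (Fin n) ℝ)ᵀ)⁻¹ *ᵥ v = v' := by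
  have hu : u ≠ 0 := by
    rintro rfl
    exact hc (by simpa using huv.symm)
  have hu' : u' ≠ 0 := by
    rintro rfl
    exact hc (by simpa using huv'.symm)
  obtain ⟨K, hK, hKu⟩ := exists_det_one_mulVec_eq hn u u' hu hu'
  have hKt : IsUnit Kᵀ.det := by simp [hK]
  have hw : u' ⬝ᵥ ((Kᵀ)⁻¹ *ᵥ v) = c := by
    rw [← hKu, dotProduct_comm, dotProduct_mulVec, ← mulVec_transpose, mulVec_mulVec,
      mul_nonsing_inv _ hKt, one_mulVec, dotProduct_comm, huv]
  obtain ⟨T, hT, hTu, hTv⟩ := exists_det_one_fix c hc u' v' _ huv' hw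
  refine ⟨⟨T * K, by rw [det_mul, hT, hK, one_mul]⟩, ?_, ?_⟩
  · change (T * K) *ᵥ u = u'
    rw [← mulVec_mulVec, hKu, hTu]
  · change ((T * K)ᵀ)⁻¹ *ᵥ v = v'
    have hv : (T * K)ᵀ *ᵥ v' = v := by
      rw [transpose_mul, ← mulVec_mulVec, hTv, mulVec_mulVec, mul_nonsing_inv _ hKt, one_mulVec]
    have hu : IsUnit ((T * K)ᵀ).det := by simp [hT, hK]
    rw [← hv, mulVec_mulVec, nonsing_inv_mul _ hu, one_mulVec]
end

section
/- Let n ≥ 3. The group SL(n,ℝ), acting on ℝⁿ × ℝⁿ by h·(u,v) = (h u, (hᵀ)⁻¹ v), acts transitively on the set {(u,v) ∈ ℝⁿ × ℝⁿ : ⟨u,v⟩ = 0, u ≠ 0, v ≠ 0}. -/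
/-!
Every pair `(u, v)` of nonzero orthogonal vectors is a translate of the standard pair `(e₀, e₁)`.
Indeed `u / ‖u‖, v / ‖v‖` extend to an orthonormal basis, the columns of an orthogonal matrix `P`;
for a diagonal matrix `D` with first two entries `‖u‖, ‖v‖⁻¹`, the matrix `B = P D` satisfies
`B e₀ = u` and `Bᵀ v = e₁`. The third diagonal entry, available because `n ≥ 3`, is free and is
chosen so that `det B = 1` (`exists_sl_standard`). If `B` and `B'` are the matrices attached
to two pairs, `B' B⁻¹` carries the first pair to the second.
-/

open Matrix

/-- The first two columns of a suitable orthogonal matrix are proportional to two given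
nonzero orthogonal vectors. -/
lemma exists_orthogonal_matrix (m : ℕ) (u v : Fin (m + 3) → ℝ)
    (huv : u ⬝ᵥ v = 0) (hu : u ≠ 0) (hv : v ≠ 0) :
    ∃ (P : Matrix (Fin (m + 3)) (Fin (m + 3)) ℝ) (a c : ℝ), a ≠ 0 ∧ c ≠ 0 ∧ Pᵀ * P = 1 ∧
      u = a • P.col 0 ∧ v = c • P.col 1 := by
  set x : EuclideanSpace ℝ (Fin (m + 3)) := WithLp.toLp 2 u with hx
  set y : EuclideanSpace ℝ (Fin (m + 3)) := WithLp.toLp 2 v with hy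
  have hx0 : x ≠ 0 := by simpa [hx] using hu
  have hy0 : y ≠ 0 := by simpa [hy] using hv
  have hxy : inner ℝ x y = 0 := by
    rw [EuclideanSpace.inner_eq_star_dotProduct]
    simpa [hx, hy, dotProduct_comm] using huv
  have hyx : inner ℝ y x = 0 := by rw [real_inner_comm]; exact hxy
  have hxn : ‖x‖ ≠ 0 := norm_ne_zero_iff.mpr hx0
  have hyn : ‖y‖ ≠ 0 := norm_ne_zero_iff.mpr hy0
  let w : Fin (m + 3) → EuclideanSpace ℝ (Fin (m + 3)) :=
    fun i => if i = 0 then ‖x‖⁻¹ • x else ‖y‖⁻¹ • y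
  have hw : Orthonormal ℝ (({0, 1} : Set (Fin (m + 3))).domRestrict w) := by
    constructor
    · rintro ⟨i, rfl | rfl⟩ <;> simp [Set.domRestrict, w, norm_smul, hxn, hyn]
    · rintro ⟨i, rfl | rfl⟩ ⟨j, rfl | rfl⟩ hij <;>
        simp [Set.domRestrict, w, hxy, hyx, inner_smul_left, inner_smul_right] at hij ⊢
  obtain ⟨b, hb⟩ := hw.exists_orthonormalBasis_extension_of_card_eq (by simp)
  refine ⟨Matrix.of fun i j => b j i, ‖x‖, ‖y‖, hxn, hyn, ?_, ?_, ?_⟩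
  · ext i j
    have h := orthonormal_iff_ite.mp b.orthonormal i j
    rw [EuclideanSpace.inner_eq_star_dotProduct] at h
    simpa [Matrix.mul_apply, dotProduct, Matrix.one_apply, mul_comm] using h
  · have h := hb 0 (by simp)
    ext i
    have hi : x i = u i := rfl
    simp [h, w, hxn, hi]
  · have h := hb 1 (by simp)
    ext i
    have hi : y i = v i := rfl
    simp [h, w, hyn, hi]

/-- The pair `(e₀, e₁)` is carried to `(u, v)` by a matrix of determinant one; the condition
`(Bᵀ)⁻¹ e₁ = v` is written without the inverse. -/
lemma exists_sl_standard (m : ℕ) (u v : Fin (m + 3) → ℝ)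
    (huv : u ⬝ᵥ v = 0) (hu : u ≠ 0) (hv : v ≠ 0) :
    ∃ B : Matrix (Fin (m + 3)) (Fin (m + 3)) ℝ, B.det = 1 ∧
      B *ᵥ Pi.single 0 1 = u ∧ Bᵀ *ᵥ v = Pi.single 1 1 := by
  obtain ⟨P, a, c, ha, hc, hP, rfl, rfl⟩ := exists_orthogonal_matrix m u v huv hu hv
  have hdet : P.det ≠ 0 := by
    intro h
    have := congrArg Matrix.det hP
    simp [h] at this
  have hcol : P.col 1 = P *ᵥ Pi.single 1 1 := by simp
  refine ⟨P * diagonal (Fin.cons a (Fin.cons c⁻¹ (Fin.cons (c / (a * P.det)) fun _ => 1))),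
    ?_, ?_, ?_⟩
  · rw [det_mul, det_diagonal]
    simp only [Fin.prod_univ_succ, Fin.cons_zero, Fin.cons_succ, Finset.prod_const_one]
    field_simp
  · rw [← mulVec_mulVec, diagonal_mulVec_single, mulVec_single]
    ext i
    simp [mul_comm]
  · rw [hcol, transpose_mul, ← mulVec_mulVec, mulVec_smul, mulVec_mulVec _ Pᵀ, hP, one_mulVec,
      mulVec_smul, diagonal_transpose, diagonal_mulVec_single]
    have h1 : (1 : Fin (m + 3)) = Fin.succ 0 := rfl
    rw [← Pi.single_smul, h1, Fin.cons_succ, Fin.cons_zero]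
    simp [hc]

/-- for `n ≥ 3`, the group `SL(n, ℝ)`, acting on `ℝⁿ × ℝⁿ` by
`h · (u, v) = (h u, (hᵀ)⁻¹ v)`, acts transitively on
`{(u, v) : ⟨u, v⟩ = 0, u ≠ 0, v ≠ 0}`. -/
theorem sl_transitive_on_null_pairs (n : ℕ) (hn : 3 ≤ n)
    (u v u' v' : Fin n → ℝ)
    (huv : u ⬝ᵥ v = 0) (hu : u ≠ 0) (hv : v ≠ 0)
    (huv' : u' ⬝ᵥ v' = 0) (hu' : u' ≠ 0) (hv' : v' ≠ 0) :
    ∃ h : Matrix.SpecialLinearGroup (Fin n) ℝ,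
      (h : Matrix (Fin n) (Fin n) ℝ) *ᵥ u = u' ∧
      ((h : Matrix (Fin n) (Fin n) ℝ)ᵀ)⁻¹ *ᵥ v = v' := by
  obtain ⟨m, rfl⟩ := Nat.exists_eq_add_of_le' hn
  obtain ⟨B, hB, hBu, hBv⟩ := exists_sl_standard m u v huv hu hv
  obtain ⟨B', hB', hBu', hBv'⟩ := exists_sl_standard m u' v' huv' hu' hv'
  have hunit : IsUnit B.det := by simp [hB]
  have hdet : (B' * B⁻¹).det = 1 := by simp [det_mul, det_nonsing_inv, hB, hB']
  have hu_map : (B' * B⁻¹) *ᵥ u = u' := by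
    rw [← hBu, mulVec_mulVec, Matrix.mul_assoc, nonsing_inv_mul _ hunit, Matrix.mul_one, hBu']
  have hv_map : (B' * B⁻¹)ᵀ *ᵥ v' = v := by
    rw [transpose_mul, ← mulVec_mulVec, hBv', ← hBv, mulVec_mulVec, ← transpose_mul,
      mul_nonsing_inv _ hunit, transpose_one, one_mulVec]
  refine ⟨⟨B' * B⁻¹, hdet⟩, hu_map, ?_⟩
  change ((B' * B⁻¹)ᵀ)⁻¹ *ᵥ v = v'
  rw [← hv_map, mulVec_mulVec, nonsing_inv_mul _ (by rw [det_transpose, hdet]; exact isUnit_one),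
    one_mulVec]
end

section
/- Let n ≥ 3 and let X₁ = {(x,y) ∈ ℝ^{n+1} × ℝ^{n+1} : ⟨x,y⟩ = 1}, with coordinates x = (x₁,x'), y = (y₁,y'), x',y' ∈ ℝⁿ. Suppose F : X₁ → ℝ is continuous and invariant under the action of SL(n,ℝ) given by h·(x₁,x',y₁,y') = (x₁, h x', y₁, (hᵀ)⁻¹ y'). Then there exists a continuous function Φ : ℝ² → ℝ such that F(x,y) = Φ(x₁, y₁) for all (x,y) ∈ X₁. -/
/-!
The candidate for `Φ` is `F ∘ s`, where `s (a, b) = ((a, e₀), (b, (1 - a b) e₀))` is a continuous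
section of `q`. Along the part of `X₁` where `⟨x', y'⟩ = 1 - x₁ y₁ ≠ 0`, every point can be moved to
the section by transvections `1 + v uᵀ` with `⟨u, v⟩ = 0`, which act by
`x' ↦ x' + ⟨u, x'⟩ v`, `y' ↦ y' - ⟨v, y'⟩ u` (`transvection_invariance`): `x'` is carried to `e₀`
(`move_to_basis`), and a shear fixing `e₀` then carries `y'` to a multiple of `e₀`
(`eq_section_of_ne_zero`). The part where `⟨x', y'⟩ ≠ 0` is dense in `X₁`
(a point with `⟨x', y'⟩ = 0` has `x₁ ≠ 0`, so `x'`, `y'` can be perturbed freely and `y₁` adjusted),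
and continuity of `F` gives the identity everywhere.
-/

open Matrix

/-- The set `X₁ = {(x, y) ∈ ℝ^{n+1} × ℝ^{n+1} : ⟨x, y⟩ = 1}`, where a point is written in
split coordinates `((x₁, x'), (y₁, y'))` with `x₁, y₁ ∈ ℝ` and `x', y' ∈ ℝⁿ`, so that
`⟨x, y⟩ = x₁ y₁ + ⟨x', y'⟩`. -/
def X1split (n : ℕ) : Set ((ℝ × (Fin n → ℝ)) × (ℝ × (Fin n → ℝ))) :=
  {p | p.1.1 * p.2.1 + p.1.2 ⬝ᵥ p.2.2 = 1}

/-- Invariance of `F` under `1 + v uᵀ ∈ SL(n, ℝ)`, with the action written out. -/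
lemma transvection_invariance {n : ℕ}
    {F : (ℝ × (Fin n → ℝ)) × (ℝ × (Fin n → ℝ)) → ℝ}
    (hFinv : ∀ h : Matrix.SpecialLinearGroup (Fin n) ℝ, ∀ p ∈ X1split n,
      F ((p.1.1, (h : Matrix (Fin n) (Fin n) ℝ) *ᵥ p.1.2),
         (p.2.1, ((h : Matrix (Fin n) (Fin n) ℝ)ᵀ)⁻¹ *ᵥ p.2.2)) = F p)
    {u v : Fin n → ℝ} (huv : u ⬝ᵥ v = 0) {a b : ℝ} {x y : Fin n → ℝ}
    (hp : a * b + x ⬝ᵥ y = 1) :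
    F ((a, x + (u ⬝ᵥ x) • v), (b, y - (v ⬝ᵥ y) • u)) = F ((a, x), (b, y)) := by
  have hdet : (1 + vecMulVec v u).det = 1 := by
    rw [vecMulVec_eq Unit, det_one_add_replicateCol_mul_replicateRow, huv, add_zero]
  have hinv : ((1 + vecMulVec v u)ᵀ)⁻¹ = 1 - vecMulVec u v := by
    apply Matrix.inv_eq_right_inv
    rw [transpose_add, transpose_one, transpose_vecMulVec, add_mul, mul_sub, mul_sub,
      vecMulVec_mul_vecMulVec, dotProduct_comm v u, huv]
    simp
  have h := hFinv ⟨1 + vecMulVec v u, hdet⟩ ((a, x), (b, y)) hp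
  rw [← h]
  simp only [hinv, add_mulVec, sub_mulVec, one_mulVec, vecMulVec_mulVec, op_smul_eq_smul]

lemma transvection_dotProduct {n : ℕ} {u v : Fin n → ℝ} (huv : u ⬝ᵥ v = 0) (x y : Fin n → ℝ) :
    (x + (u ⬝ᵥ x) • v) ⬝ᵥ (y - (v ⬝ᵥ y) • u) = x ⬝ᵥ y := by
  simp only [add_dotProduct, dotProduct_sub, smul_dotProduct, dotProduct_smul, smul_eq_mul,
    dotProduct_comm v u, huv, dotProduct_comm x u]
  ring

/-- If `x'` is not proportional to `e_i`, a single transvection carries it to `e_i`: take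
`v = e_i - x'` and `u` with `⟨u, x'⟩ = ⟨u, e_i⟩ = 1`. -/
lemma move_to_basis {n : ℕ}
    {F : (ℝ × (Fin n → ℝ)) × (ℝ × (Fin n → ℝ)) → ℝ}
    (hFinv : ∀ h : Matrix.SpecialLinearGroup (Fin n) ℝ, ∀ p ∈ X1split n,
      F ((p.1.1, (h : Matrix (Fin n) (Fin n) ℝ) *ᵥ p.1.2),
         (p.2.1, ((h : Matrix (Fin n) (Fin n) ℝ)ᵀ)⁻¹ *ᵥ p.2.2)) = F p)
    {i j : Fin n} (hij : i ≠ j) {a b : ℝ} {x y : Fin n → ℝ}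
    (hp : a * b + x ⬝ᵥ y = 1) (hxj : x j ≠ 0) :
    ∃ z : Fin n → ℝ, z i = x ⬝ᵥ y ∧
      F ((a, x), (b, y)) = F ((a, Pi.single i 1), (b, z)) := by
  set u : Fin n → ℝ := Pi.single i 1 + Pi.single j ((1 - x i) / x j) with hu
  set v : Fin n → ℝ := Pi.single i 1 - x with hv
  have hux : u ⬝ᵥ x = 1 := by
    simp only [hu, add_dotProduct, single_dotProduct]
    field_simp
    ring
  have hue : u ⬝ᵥ Pi.single i 1 = 1 := by
    simp [hu, hij]
  have huv : u ⬝ᵥ v = 0 := by rw [hv, dotProduct_sub, hux, hue, sub_self]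
  have hx : x + (u ⬝ᵥ x) • v = Pi.single i 1 := by rw [hux, hv]; simp
  refine ⟨y - (v ⬝ᵥ y) • u, ?_, ?_⟩
  · rw [← transvection_dotProduct huv x y, hx, single_dotProduct, one_mul]
  · rw [← transvection_invariance hFinv huv hp, hx]

lemma eq_section_of_ne_zero {n : ℕ}
    {F : (ℝ × (Fin n → ℝ)) × (ℝ × (Fin n → ℝ)) → ℝ}
    (hFinv : ∀ h : Matrix.SpecialLinearGroup (Fin n) ℝ, ∀ p ∈ X1split n,
      F ((p.1.1, (h : Matrix (Fin n) (Fin n) ℝ) *ᵥ p.1.2),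
         (p.2.1, ((h : Matrix (Fin n) (Fin n) ℝ)ᵀ)⁻¹ *ᵥ p.2.2)) = F p)
    {i k : Fin n} (hik : i ≠ k) {a b : ℝ} {x y : Fin n → ℝ}
    (hp : a * b + x ⬝ᵥ y = 1) (hc : x ⬝ᵥ y ≠ 0) :
    F ((a, x), (b, y)) = F ((a, Pi.single i 1), (b, Pi.single i (1 - a * b))) := by
  obtain ⟨z, hz, hF⟩ : ∃ z : Fin n → ℝ, z i = x ⬝ᵥ y ∧
      F ((a, x), (b, y)) = F ((a, Pi.single i 1), (b, z)) := by
    by_cases h : ∃ j, i ≠ j ∧ x j ≠ 0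
    · obtain ⟨j, hij, hxj⟩ := h
      exact move_to_basis hFinv hij hp hxj
    · push Not at h
      -- Here `x` is a nonzero multiple of `e_i`; adding `x i • e_k` makes `move_to_basis` apply.
      have hxi : x i ≠ 0 := by
        intro hxi
        apply hc
        have : x = 0 := by
          ext j
          by_cases hj : i = j
          · subst hj; exact hxi
          · exact h j hj
        rw [this, zero_dotProduct]
      have huv : (Pi.single i 1 : Fin n → ℝ) ⬝ᵥ Pi.single k 1 = 0 := by simp [hik]
      have hdot := transvection_dotProduct huv x y
      rw [← transvection_invariance hFinv huv hp, ← hdot]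
      refine move_to_basis hFinv hik (by rw [hdot]; exact hp) ?_
      simp [h k hik, hxi]
  rw [hF]
  have hzi : z i ≠ 0 := hz ▸ hc
  -- The shear `1 + e_i uᵀ` with `u = z / z i - e_i` fixes `e_i` and kills all `z j`, `j ≠ i`.
  set u : Fin n → ℝ := (z i)⁻¹ • z - Pi.single i 1 with hu
  have hue : u ⬝ᵥ Pi.single i 1 = 0 := by simp [hu, hzi]
  rw [← transvection_invariance hFinv hue (by simpa [hz] using hp), hue]
  have hfin : z - ((Pi.single i 1 : Fin n → ℝ) ⬝ᵥ z) • u = Pi.single i (1 - a * b) := by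
    rw [show 1 - a * b = z i by rw [hz]; linarith, single_dotProduct, one_mul, hu, smul_sub,
      smul_inv_smul₀ hzi, sub_sub_cancel, ← Pi.single_smul', smul_eq_mul, mul_one]
  rw [hfin, zero_smul, add_zero]

/-- for `n ≥ 3`, any continuous function on `X₁` invariant under the action
`h · (x₁, x', y₁, y') = (x₁, h x', y₁, (hᵀ)⁻¹ y')` of `SL(n, ℝ)` is the pull-back by
`q(x, y) = (x₁, y₁)` of a continuous function on `ℝ²`. -/
theorem invariant_continuous_factors_through_q (n : ℕ) (hn : 3 ≤ n)
    (F : (ℝ × (Fin n → ℝ)) × (ℝ × (Fin n → ℝ)) → ℝ)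
    (hFcont : ContinuousOn F (X1split n))
    (hFinv : ∀ h : Matrix.SpecialLinearGroup (Fin n) ℝ, ∀ p ∈ X1split n,
      F ((p.1.1, (h : Matrix (Fin n) (Fin n) ℝ) *ᵥ p.1.2),
         (p.2.1, ((h : Matrix (Fin n) (Fin n) ℝ)ᵀ)⁻¹ *ᵥ p.2.2)) = F p) :
    ∃ Φ : ℝ × ℝ → ℝ, Continuous Φ ∧ ∀ p ∈ X1split n, F p = Φ (p.1.1, p.2.1) := by
  let i : Fin n := ⟨0, by omega⟩
  let k : Fin n := ⟨1, by omega⟩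
  have hik : i ≠ k := by simp [i, k]
  have hΦ : Continuous fun q : ℝ × ℝ =>
      F ((q.1, Pi.single i 1), (q.2, Pi.single i (1 - q.1 * q.2))) := by
    refine hFcont.comp_continuous ?_ ?_
    · have := continuous_single (A := fun _ : Fin n => ℝ) i
      fun_prop
    · intro q
      simp [X1split]
  refine ⟨_, hΦ, ?_⟩
  rintro ⟨⟨a, x⟩, ⟨b, y⟩⟩ hp
  change a * b + x ⬝ᵥ y = 1 at hp
  by_cases hc : x ⬝ᵥ y = 0
  swap
  · exact eq_section_of_ne_zero hFinv hik hp hc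
  have ha : a ≠ 0 := by
    rintro rfl
    simp [hc] at hp
  -- A path in `X₁` through the given point at `t = 0`, along which
  -- `⟨x', y'⟩ = t (x i + y i + t)` vanishes for at most two values of `t`.
  let e : Fin n → ℝ := Pi.single i 1
  let β : ℝ → ℝ := fun t => (1 - (x + t • e) ⬝ᵥ (y + t • e)) / a
  let γ : ℝ → (ℝ × (Fin n → ℝ)) × (ℝ × (Fin n → ℝ)) := fun t =>
    ((a, x + t • e), (β t, y + t • e))
  have hdot : ∀ t : ℝ, (x + t • e) ⬝ᵥ (y + t • e) = t * (x i + y i + t) := by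
    intro t
    simp [e, hc]
    ring
  have hβ : Continuous β := by
    simp only [β, hdot]
    fun_prop
  have hγ : Continuous γ := by fun_prop
  have hγX : ∀ t, a * β t + (x + t • e) ⬝ᵥ (y + t • e) = 1 := by
    intro t
    simp only [β]
    field_simp
    ring
  have hβ0 : β 0 = b := by
    simp only [β, hdot]
    field_simp
    linarith
  have hγ0 : γ 0 = ((a, x), (b, y)) := by simp [γ, hβ0]
  have hFγ : Continuous fun t => F (γ t) := hFcont.comp_continuous hγ hγX
  have hΦγ : Continuous fun t =>
      F ((a, Pi.single i 1), (β t, Pi.single i (1 - a * β t))) :=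
    hΦ.comp (continuous_const.prodMk hβ)
  have hdense : Dense ({0, -(x i + y i)}ᶜ : Set ℝ) :=
    (Set.toFinite _).countable.dense_compl ℝ
  have heq := Continuous.ext_on hdense hFγ hΦγ (by
    intro t ht
    simp only [Set.mem_compl_iff, Set.mem_insert_iff, Set.mem_singleton_iff, not_or] at ht
    refine eq_section_of_ne_zero hFinv hik (hγX t) ?_
    rw [hdot]
    refine mul_ne_zero ht.1 fun h => ht.2 ?_
    linarith)
  have := congrFun heq 0
  simpa only [hγ0, hβ0] using this
end

section
/- Let n ≥ 3. Let T be a tempered distribution on ℝⁿ × ℝⁿ, i.e. a continuous linear functional on the Schwartz space 𝓢(ℝⁿ × ℝⁿ, ℂ). Suppose T is invariant under the action of GL⁺(n,ℝ) given by (u,v) ↦ (h u, (hᵀ)⁻¹ v); that is, T(φ ∘ A_h) = T(φ) for every Schwartz function φ and every h ∈ GL(n,ℝ) with det h > 0, where A_h(u,v) = (h⁻¹ u, hᵀ v). Then T is invariant under the connected component of the identity of the orthogonal group O(Q₁) of the quadratic form Q₁(u,v) = ⟨u,v⟩: T(φ ∘ M⁻¹) = T(φ) for every Schwartz function φ and every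 M ∈ O(Q₁)₀. -/
/-!
The proof works with infinitesimal symmetries. Write `(u, v)` for the coordinates of `ℝⁿ × ℝⁿ`.

Differentiating the `GL⁺(n)` invariance at the identity shows that `T` vanishes on the image of each
operator `E p q = u_p ∂_{u_q} - v_q ∂_{v_p}` (`gl_coord`). For indices `i, k` choose a third index
`j`, which is possible as `n ≥ 3`. With `L = u_i ∂_{v_k} - u_k ∂_{v_i}`, the Weyl algebra identity
`L = E i j ∂_{v_k} u_j - E k j ∂_{v_i} u_j - E j j L - E i j u_k ∂_{v_j} + E k j u_i ∂_{v_j}`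
(`weyl_identity`) writes `L` as a combination of operators that start with some `E p q` on the left,
so `T ∘ L = 0` (`so_coord`); the same holds with `u` and `v` exchanged. Hence `T` is killed by the
whole Lie algebra `so(n, n)`.

The new generators are matrices of square zero, so they integrate to the unipotent block matrices
`[[1, Y], [0, 1]]` and `[[1, 0], [X, 1]]` with `X`, `Y` skew-symmetric (`inv_one_add_of_sq_zero`). An
element of `O(Q₁)` whose upper left block has positive determinant is a product of two such matrices
and some `diag(A, A⁻ᵀ)` (`inv_of_det_pos`), so `T` is invariant near the identity, and a
connectedness argument extends this to the identity component.

The analytic input is that `t⁻¹ (φ ∘ (1 + tX) - φ)` converges to `D_X φ` in the Schwartz space, which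
follows from an `O(t²)` bound on all seminorms of the Taylor remainder
(`norm_iteratedFDeriv_comp_sub_sub_le`).
-/

open Matrix SchwartzMap

/-- The quadratic form `Q₁(u, v) = Σᵢ uᵢ vᵢ` on `ℝⁿ × ℝⁿ ≅ ℝ^{2n}`,
where a vector of `ℝ^{2n}` is indexed by `Fin n ⊕ Fin n`. -/
def Q1 (n : ℕ) (w : (Fin n ⊕ Fin n) → ℝ) : ℝ :=
  ∑ i : Fin n, w (Sum.inl i) * w (Sum.inr i)

/-- The orthogonal group `O(Q₁)` of the quadratic form `Q₁`, as a set of matrices. -/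
def OQ1 (n : ℕ) : Set (Matrix (Fin n ⊕ Fin n) (Fin n ⊕ Fin n) ℝ) :=
  {M | IsUnit M ∧ ∀ w, Q1 n (M *ᵥ w) = Q1 n w}

/-! ### Differentiating along linear vector fields in the Schwartz space -/

section
variable {E F : Type} [NormedAddCommGroup E] [NormedSpace ℝ E]
  [NormedAddCommGroup F] [NormedSpace ℝ F]

/-- For small `t` the linear map `1 + tX` shrinks norms by at most a factor `2`, so that
polynomial weights at `x` can be traded for weights at `x + t X x`. -/
theorem norm_le_two_mul_norm_add_smul (X : E →L[ℝ] E) {t : ℝ} (ht : |t| * ‖X‖ ≤ 1 / 2) (x : E) :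
    ‖x‖ ≤ 2 * ‖x + t • X x‖ := by
  have h1 : ‖t • X x‖ ≤ 1 / 2 * ‖x‖ := by
    rw [norm_smul, Real.norm_eq_abs]
    calc |t| * ‖X x‖ ≤ |t| * (‖X‖ * ‖x‖) := by gcongr; exact X.le_opNorm x
      _ = (|t| * ‖X‖) * ‖x‖ := by ring
      _ ≤ _ := by gcongr
  have h2 : ‖x‖ ≤ ‖x + t • X x‖ + ‖t • X x‖ := by
    simpa using norm_sub_le (x + t • X x) (t • X x)
  linarith

theorem hasFDerivAt_comp_add_smul (X : E →L[ℝ] E) (t : ℝ) (φ : 𝓢(E, F)) (x : E) :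
    HasFDerivAt (fun y => φ (y + t • X y))
      ((fderiv ℝ φ (x + t • X x)).comp (ContinuousLinearMap.id ℝ E + t • X)) x :=
  (φ.differentiableAt (x := x + t • X x)).hasFDerivAt.comp x
    ((hasFDerivAt_id x).add (X.hasFDerivAt.const_smul t))

theorem hasDerivAt_comp_add_smul (X : E →L[ℝ] E) (φ : 𝓢(E, F)) (x : E) (s : ℝ) :
    HasDerivAt (fun s : ℝ => φ (x + s • X x)) (fderiv ℝ φ (x + s • X x) (X x)) s := by
  have h := ((hasDerivAt_id s).smul_const (X x)).const_add x
  have h' := (φ.differentiableAt (x := x + s • X x)).hasFDerivAt.comp_hasDerivAt s h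
  rw [one_smul] at h'
  exact h'

theorem contDiff_comp_add_smul (X : E →L[ℝ] E) (t : ℝ) (φ : 𝓢(E, F)) (m : ℕ) :
    ContDiff ℝ m (fun y => φ (y + t • X y)) :=
  (φ.smooth m).comp (by fun_prop)


/-- First-order weighted Taylor bound, from the mean value inequality along `s ↦ x + s X x`. -/
theorem norm_comp_sub_le (X : E →L[ℝ] E) (φ : 𝓢(E, F)) (k : ℕ) :
    ∃ C, 0 ≤ C ∧ ∀ t : ℝ, |t| * ‖X‖ ≤ 1 / 2 → ∀ x,
      ‖x‖ ^ k * ‖φ (x + t • X x) - φ x‖ ≤ C * |t| := by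
  refine ⟨2 ^ (k + 1) * ‖X‖ * SchwartzMap.seminorm ℝ (k + 1) 1 φ, by positivity, fun t ht x => ?_⟩
  have := Convex.norm_image_sub_le_of_norm_hasDerivWithin_le (s := Set.Icc (-|t|) |t|)
    (f := fun s : ℝ => ‖x‖ ^ k • φ (x + s • X x))
    (f' := fun s : ℝ => ‖x‖ ^ k • (fderiv ℝ φ (x + s • X x) (X x)))
    (C := 2 ^ (k + 1) * ‖X‖ * SchwartzMap.seminorm ℝ (k + 1) 1 φ) (x := 0) (y := t)
    (fun s _ => ((hasDerivAt_comp_add_smul X φ x s).const_smul _).hasDerivWithinAt) ?_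
    (convex_Icc _ _) (by simp) ⟨neg_abs_le t, le_abs_self t⟩
  · simpa [← smul_sub, norm_smul] using this
  · intro s hs
    have hs' : |s| * ‖X‖ ≤ 1 / 2 :=
      le_trans (mul_le_mul_of_nonneg_right (abs_le.2 hs) (norm_nonneg X)) ht
    have h2 := norm_le_two_mul_norm_add_smul X hs' x
    have h3 := φ.le_seminorm ℝ (k + 1) 1 (x + s • X x)
    rw [norm_iteratedFDeriv_one] at h3
    rw [norm_smul, norm_pow, norm_norm]
    calc ‖x‖ ^ k * ‖fderiv ℝ φ (x + s • X x) (X x)‖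
        ≤ ‖x‖ ^ k * (‖fderiv ℝ φ (x + s • X x)‖ * (‖X‖ * ‖x‖)) := by
          gcongr
          exact (ContinuousLinearMap.le_opNorm _ _).trans (by gcongr; exact X.le_opNorm x)
      _ = ‖x‖ ^ (k + 1) * (‖X‖ * ‖fderiv ℝ φ (x + s • X x)‖) := by ring
      _ ≤ (2 * ‖x + s • X x‖) ^ (k + 1) * (‖X‖ * ‖fderiv ℝ φ (x + s • X x)‖) := by gcongr
      _ = 2 ^ (k + 1) * ‖X‖ * (‖x + s • X x‖ ^ (k + 1) * ‖fderiv ℝ φ (x + s • X x)‖) := by ring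
      _ ≤ _ := by gcongr

/-- Second-order weighted Taylor bound, obtained by applying the first-order bound to `Dφ`
inside the mean value inequality. -/
theorem norm_comp_sub_sub_le (X : E →L[ℝ] E) (φ : 𝓢(E, F)) (k : ℕ) :
    ∃ C, 0 ≤ C ∧ ∀ t : ℝ, |t| * ‖X‖ ≤ 1 / 2 → ∀ x,
      ‖x‖ ^ k * ‖φ (x + t • X x) - φ x - t • fderiv ℝ φ x (X x)‖ ≤ C * t ^ 2 := by
  obtain ⟨C, hC, hb⟩ := norm_comp_sub_le X (SchwartzMap.fderivCLM ℝ E F φ) (k + 1)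
  refine ⟨‖X‖ * C, by positivity, fun t ht x => ?_⟩
  have := Convex.norm_image_sub_le_of_norm_hasDerivWithin_le (s := Set.Icc (-|t|) |t|)
    (f := fun s : ℝ => ‖x‖ ^ k • (φ (x + s • X x) - s • fderiv ℝ φ x (X x)))
    (f' := fun s : ℝ => ‖x‖ ^ k •
      (fderiv ℝ φ (x + s • X x) (X x) - (1 : ℝ) • fderiv ℝ φ x (X x)))
    (C := ‖X‖ * C * ‖t‖) (x := 0) (y := t)
    (fun s _ => (((hasDerivAt_comp_add_smul X φ x s).sub
      ((hasDerivAt_id s).smul_const _)).const_smul _).hasDerivWithinAt) ?_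
    (convex_Icc _ _) (by simp) ⟨neg_abs_le t, le_abs_self t⟩
  · simp only [← smul_sub, norm_smul, norm_pow, norm_norm, zero_smul, add_zero, sub_zero]
      at this
    rw [sub_right_comm, ← sq_abs, pow_two, ← mul_assoc, ← Real.norm_eq_abs]
    exact this
  · intro s hs
    have hst : |s| ≤ |t| := abs_le.2 hs
    have hs' : |s| * ‖X‖ ≤ 1 / 2 := le_trans (by gcongr) ht
    have h3 := hb s hs' x
    simp only [SchwartzMap.fderivCLM_apply] at h3
    rw [norm_smul, norm_pow, norm_norm, one_smul, ← _root_.sub_apply]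
    calc ‖x‖ ^ k * ‖(fderiv ℝ φ (x + s • X x) - fderiv ℝ φ x) (X x)‖
        ≤ ‖x‖ ^ k * (‖fderiv ℝ φ (x + s • X x) - fderiv ℝ φ x‖ * (‖X‖ * ‖x‖)) := by
          gcongr
          exact (ContinuousLinearMap.le_opNorm _ _).trans (by gcongr; exact X.le_opNorm x)
      _ = ‖X‖ * (‖x‖ ^ (k + 1) * ‖fderiv ℝ φ (x + s • X x) - fderiv ℝ φ x‖) := by ring
      _ ≤ ‖X‖ * (C * |s|) := by gcongr
      _ ≤ ‖X‖ * (C * |t|) := by gcongr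
      _ = _ := by rw [Real.norm_eq_abs]; ring

/-- The linear map `A ↦ A ∘ X`. -/
noncomputable def precomp (F : Type) [NormedAddCommGroup F] [NormedSpace ℝ F] (X : E →L[ℝ] E) :
    (E →L[ℝ] F) →L[ℝ] (E →L[ℝ] F) :=
  (ContinuousLinearMap.compL ℝ E E F).flip X

theorem norm_iteratedFDeriv_smul_precomp_le (X : E →L[ℝ] E) (t : ℝ) {g : E → E →L[ℝ] F} {l : ℕ}
    (hg : ContDiff ℝ l g) (x : E) :
    ‖iteratedFDeriv ℝ l (fun y => t • precomp F X (g y)) x‖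
      ≤ |t| * ‖precomp F X‖ * ‖iteratedFDeriv ℝ l g x‖ := by
  have h := (t • precomp F X).norm_iteratedFDeriv_comp_left (hg.contDiffAt (x := x)) le_rfl
  rwa [norm_smul, Real.norm_eq_abs] at h

/-- The first-order bound for all derivatives. The induction on `l` uses that the derivative of
`φ ∘ (1 + tX) - φ` is the same difference for `Φ = Dφ`, plus `t` times terms composed with `X`;
this changes the target space, hence the quantification over `F` inside the induction. -/
theorem norm_iteratedFDeriv_comp_sub_le (X : E →L[ℝ] E) (k l : ℕ) :
    ∀ {F : Type} [NormedAddCommGroup F] [NormedSpace ℝ F] (φ : 𝓢(E, F)),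
    ∃ C, 0 ≤ C ∧ ∀ t : ℝ, |t| ≤ 1 → |t| * ‖X‖ ≤ 1 / 2 → ∀ x,
      ‖x‖ ^ k * ‖iteratedFDeriv ℝ l (fun y => φ (y + t • X y) - φ y) x‖ ≤ C * |t| := by
  induction l with
  | zero =>
    intro F _ _ φ
    obtain ⟨C, hC, h⟩ := norm_comp_sub_le X φ k
    exact ⟨C, hC, fun t _ ht x => by simpa using h t ht x⟩
  | succ l ih =>
    intro F _ _ φ
    set Φ := SchwartzMap.fderivCLM ℝ E F φ with hΦ
    obtain ⟨C, hC, h⟩ := ih Φ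
    set R := ‖precomp F X‖ with hR
    refine ⟨(1 + R) * C + R * SchwartzMap.seminorm ℝ k l Φ, by positivity, fun t ht1 ht x => ?_⟩
    have key : fderiv ℝ (fun y => φ (y + t • X y) - φ y) =
        ((fun y => Φ (y + t • X y) - Φ y) + fun y => t • precomp F X (Φ (y + t • X y) - Φ y))
          + fun y => t • precomp F X (Φ y) := by
      funext y
      refine ((hasFDerivAt_comp_add_smul X t φ y).sub φ.differentiableAt.hasFDerivAt).fderiv.trans ?_
      ext z
      simp [precomp, hΦ, SchwartzMap.fderivCLM_apply]
      module
    have c1 : ContDiff ℝ l (fun y => Φ (y + t • X y) - Φ y) :=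
      (contDiff_comp_add_smul X t Φ l).sub (Φ.smooth l)
    have c2 : ContDiff ℝ l (fun y => t • precomp F X (Φ (y + t • X y) - Φ y)) :=
      (t • precomp F X).contDiff.comp c1
    have c3 : ContDiff ℝ l (fun y => t • precomp F X (Φ y)) :=
      (t • precomp F X).contDiff.comp (Φ.smooth l)
    have c12 : ContDiff ℝ l ((fun y => Φ (y + t • X y) - Φ y) +
        fun y => t • precomp F X (Φ (y + t • X y) - Φ y)) := c1.add c2
    rw [← norm_iteratedFDeriv_fderiv, key,
      iteratedFDeriv_add_apply c12.contDiffAt c3.contDiffAt,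
      iteratedFDeriv_add_apply c1.contDiffAt c2.contDiffAt]
    have e1 := h t ht1 ht x
    have e2 := norm_iteratedFDeriv_smul_precomp_le X t c1 x
    have e3 := norm_iteratedFDeriv_smul_precomp_le X t (Φ.smooth l) x
    have e4 := Φ.le_seminorm ℝ k l x
    rw [← hR] at e2 e3
    set a := iteratedFDeriv ℝ l (fun y => Φ (y + t • X y) - Φ y) x
    set b := iteratedFDeriv ℝ l (fun y => t • precomp F X (Φ (y + t • X y) - Φ y)) x
    set c := iteratedFDeriv ℝ l (fun y => t • precomp F X (Φ y)) x
    calc ‖x‖ ^ k * ‖a + b + c‖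
        ≤ ‖x‖ ^ k * (‖a‖ + 1 * R * ‖a‖ + |t| * R * ‖iteratedFDeriv ℝ l Φ x‖) := by
          gcongr
          refine (norm_add₃_le).trans ?_
          gcongr
          exact e2.trans (by gcongr)
      _ = (1 + R) * (‖x‖ ^ k * ‖a‖) + |t| * R * (‖x‖ ^ k * ‖iteratedFDeriv ℝ l Φ x‖) := by ring
      _ ≤ (1 + R) * (C * |t|) + |t| * R * SchwartzMap.seminorm ℝ k l Φ := by gcongr
      _ = _ := by ring

/-- The second-order bound for all derivatives: every Schwartz seminorm of
`φ ∘ (1 + tX) - φ - t D_X φ` is `O(t²)`. In the inductive step the derivative of this remainder is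
the remainder of `Φ = Dφ` plus `t (Φ ∘ (1 + tX) - Φ) ∘ X`; symmetry of `D²φ` enters here. -/
theorem norm_iteratedFDeriv_comp_sub_sub_le (X : E →L[ℝ] E) (k l : ℕ) :
    ∀ {F : Type} [NormedAddCommGroup F] [NormedSpace ℝ F] (φ : 𝓢(E, F)),
    ∃ C, 0 ≤ C ∧ ∀ t : ℝ, |t| ≤ 1 → |t| * ‖X‖ ≤ 1 / 2 → ∀ x,
      ‖x‖ ^ k * ‖iteratedFDeriv ℝ l
        (fun y => φ (y + t • X y) - φ y - t • fderiv ℝ φ y (X y)) x‖ ≤ C * t ^ 2 := by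
  induction l with
  | zero =>
    intro F _ _ φ
    obtain ⟨C, hC, h⟩ := norm_comp_sub_sub_le X φ k
    exact ⟨C, hC, fun t _ ht x => by simpa using h t ht x⟩
  | succ l ih =>
    intro F _ _ φ
    set Φ := SchwartzMap.fderivCLM ℝ E F φ with hΦ
    have hΦ' : ∀ y, Φ y = fderiv ℝ φ y := fun y => rfl
    obtain ⟨C, hC, h⟩ := ih Φ
    obtain ⟨C', hC', h'⟩ := norm_iteratedFDeriv_comp_sub_le X k l Φ
    set R := ‖precomp F X‖ with hR
    refine ⟨C + R * C', by positivity, fun t ht1 ht x => ?_⟩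
    have key : fderiv ℝ (fun y => φ (y + t • X y) - φ y - t • fderiv ℝ φ y (X y)) =
        (fun y => Φ (y + t • X y) - Φ y - t • fderiv ℝ Φ y (X y))
          + fun y => t • precomp F X (Φ (y + t • X y) - Φ y) := by
      funext y
      have hD : HasFDerivAt (fun y => fderiv ℝ φ y (X y))
          ((fderiv ℝ φ y).comp X + (fderiv ℝ Φ y).flip (X y)) y :=
        (Φ.differentiableAt (x := y)).hasFDerivAt.clm_apply X.hasFDerivAt
      refine (((hasFDerivAt_comp_add_smul X t φ y).sub φ.differentiableAt.hasFDerivAt).sub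
        (hD.const_smul t)).fderiv.trans ?_
      have hsymm : ∀ z, fderiv ℝ Φ y z (X y) = fderiv ℝ Φ y (X y) z := fun z =>
        ((φ.smooth 2).contDiffAt.isSymmSndFDerivAt (by simp)) z (X y)
      ext z
      simp [precomp, hΦ', hsymm]
      module
    have c0 : ContDiff ℝ l (fun y => Φ (y + t • X y) - Φ y) :=
      (contDiff_comp_add_smul X t Φ l).sub (Φ.smooth l)
    have c1 : ContDiff ℝ l (fun y => Φ (y + t • X y) - Φ y - t • fderiv ℝ Φ y (X y)) :=
      c0.sub ((((SchwartzMap.fderivCLM ℝ E _ Φ).smooth l).clm_apply X.contDiff).const_smul t)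
    have c2 : ContDiff ℝ l (fun y => t • precomp F X (Φ (y + t • X y) - Φ y)) :=
      (t • precomp F X).contDiff.comp c0
    rw [← norm_iteratedFDeriv_fderiv, key, iteratedFDeriv_add_apply c1.contDiffAt c2.contDiffAt]
    have e1 := h t ht1 ht x
    have e2 := norm_iteratedFDeriv_smul_precomp_le X t c0 x
    have e3 := h' t ht1 ht x
    rw [← hR] at e2
    set a := iteratedFDeriv ℝ l (fun y => Φ (y + t • X y) - Φ y) x
    set b := iteratedFDeriv ℝ l (fun y => t • precomp F X (Φ (y + t • X y) - Φ y)) x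
    set c := iteratedFDeriv ℝ l (fun y => Φ (y + t • X y) - Φ y - t • fderiv ℝ Φ y (X y)) x
    calc ‖x‖ ^ k * ‖c + b‖ ≤ ‖x‖ ^ k * (‖c‖ + |t| * R * ‖a‖) := by
          gcongr
          refine (norm_add_le _ _).trans ?_
          gcongr
      _ = ‖x‖ ^ k * ‖c‖ + |t| * R * (‖x‖ ^ k * ‖a‖) := by ring
      _ ≤ C * t ^ 2 + |t| * R * (C' * |t|) := by gcongr
      _ = C * t ^ 2 + R * C' * |t| ^ 2 := by ring
      _ = _ := by rw [sq_abs]; ring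

/-- The derivation `φ ↦ (x ↦ Dφ(x)(X x))` of the Schwartz space along the linear vector
field `X`. -/
noncomputable def derivAlong (X : E →L[ℝ] E) : 𝓢(E, ℂ) →L[ℝ] 𝓢(E, ℂ) :=
  (SchwartzMap.bilinLeftCLM (𝕜 := ℝ) (ContinuousLinearMap.id ℝ (E →L[ℝ] ℂ))
    (g := X) (by fun_prop)).comp (SchwartzMap.fderivCLM ℝ E ℂ)

theorem derivAlong_apply (X : E →L[ℝ] E) (φ : 𝓢(E, ℂ)) (x : E) :
    derivAlong X φ x = fderiv ℝ φ x (X x) := rfl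

/-- The derivative at `t = 0` of `T (φ ∘ (1 + tX))` is `T (D_X φ)`. The curve `γ` need only agree
with `φ ∘ (1 + tX)` near `t = 0`, where `1 + tX` is invertible. -/
theorem hasDerivAt_comp_one_add_smul (T : 𝓢(E, ℂ) →L[ℂ] ℂ) (X : E →L[ℝ] E) (φ : 𝓢(E, ℂ))
    (γ : ℝ → 𝓢(E, ℂ)) (hγ : ∀ᶠ t in nhds 0, ∀ x, γ t x = φ (x + t • X x)) :
    HasDerivAt (fun t => T (γ t)) (T (derivAlong X φ)) 0 := by
  have h0 : γ 0 = φ := by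
    ext x
    simpa using hγ.self_of_nhds x
  rw [hasDerivAt_iff_tendsto_slope]
  have hlim : Filter.Tendsto (fun t : ℝ => t⁻¹ • (γ t - φ)) (nhdsWithin 0 {0}ᶜ)
      (nhds (derivAlong X φ)) := by
    rw [(schwartz_withSeminorms ℝ E ℂ).tendsto_nhds]
    rintro ⟨k, l⟩ ε hε
    obtain ⟨C, hC, h⟩ := norm_iteratedFDeriv_comp_sub_sub_le X k l φ
    have hsmall : ∀ᶠ t : ℝ in nhds 0, |t| < 1 ∧ |t| * ‖X‖ < 1 / 2 ∧ C * |t| < ε := by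
      have f1 : Filter.Tendsto (fun t : ℝ => |t|) (nhds 0) (nhds 0) := by
        simpa using (continuous_abs (G := ℝ)).tendsto 0
      have f2 : Filter.Tendsto (fun t : ℝ => |t| * ‖X‖) (nhds 0) (nhds 0) := by
        simpa using f1.mul_const ‖X‖
      have f3 : Filter.Tendsto (fun t : ℝ => C * |t|) (nhds 0) (nhds 0) := by
        simpa using f1.const_mul C
      exact (f1.eventually_lt_const one_pos).and
        ((f2.eventually_lt_const (by norm_num)).and (f3.eventually_lt_const hε))
    filter_upwards [hγ.filter_mono nhdsWithin_le_nhds, hsmall.filter_mono nhdsWithin_le_nhds,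
      self_mem_nhdsWithin] with t ht ⟨ht1, ht2, ht3⟩ htne
    have htne : t ≠ 0 := htne
    have hb : SchwartzMap.seminorm ℝ k l (γ t - φ - t • derivAlong X φ) ≤ C * t ^ 2 := by
      refine SchwartzMap.seminorm_le_bound ℝ k l _ (by positivity) fun x => ?_
      have : ⇑(γ t - φ - t • derivAlong X φ) =
          fun y => φ (y + t • X y) - φ y - t • fderiv ℝ φ y (X y) := by
        funext y
        simp [ht, derivAlong_apply]
      rw [this]
      exact h t ht1.le ht2.le x
    have heq : t⁻¹ • (γ t - φ) - derivAlong X φ = t⁻¹ • (γ t - φ - t • derivAlong X φ) := by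
      rw [smul_sub _ (γ t - φ), smul_smul, inv_mul_cancel₀ htne, one_smul]
    change SchwartzMap.seminorm ℝ k l _ < ε
    -- The remainder is `O(t²)`, so dividing by `t` leaves `O(|t|) < ε`.
    rw [heq, map_smul_eq_mul, norm_inv, Real.norm_eq_abs]
    have hpos : 0 < |t| := abs_pos.2 htne
    refine lt_of_le_of_lt ?_ ht3
    rw [inv_mul_le_iff₀ hpos]
    calc _ ≤ C * t ^ 2 := hb
      _ = |t| * (C * |t|) := by rw [← sq_abs]; ring
  have := (T.continuous.tendsto _).comp hlim
  refine this.congr fun t => ?_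
  have hsm : ∀ f : 𝓢(E, ℂ), T (t⁻¹ • f) = t⁻¹ • T f := fun f =>
    (T.restrictScalars ℝ).map_smul t⁻¹ f
  simp [slope, h0, hsm]
end

/-! ### The Weyl algebra identity -/

section
/-- The identity behind the extra symmetry, in any ring with elements `x s`, `d s` satisfying the
canonical commutation relations. With `E p q` the generators of `gl(n)`, it writes the rotation
`x (a i) d (b k) - x (a k) d (b i)` as a combination of left multiples by the `E p q`; it needs an
index `j` different from `i` and `k`. -/
theorem weyl_identity {R ι κ : Type*} [Ring R] [DecidableEq ι] (x d : ι → R)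
    (hx : ∀ s t, x s * x t = x t * x s) (hd : ∀ s t, d s * d t = d t * d s)
    (hdx : ∀ s t, d s * x t = x t * d s + if s = t then 1 else 0)
    (a b : κ → ι) (ha : a.Injective) (hab : ∀ p q, a p ≠ b q)
    {i j k : κ} (hij : i ≠ j) (hkj : k ≠ j) (E : κ → κ → R)
    (hE : ∀ p q, E p q = x (a p) * d (a q) - x (b q) * d (b p)) :
    x (a i) * d (b k) - x (a k) * d (b i) =
      E i j * (d (b k) * x (a j)) - E k j * (d (b i) * x (a j))
        - E j j * (x (a i) * d (b k) - x (a k) * d (b i))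
        - E i j * (x (a k) * d (b j)) + E k j * (x (a i) * d (b j)) := by
  have hx' : ∀ s t r, x s * (x t * r) = x t * (x s * r) := fun s t r => by
    rw [← mul_assoc, hx, mul_assoc]
  have hd' : ∀ s t r, d s * (d t * r) = d t * (d s * r) := fun s t r => by
    rw [← mul_assoc, hd, mul_assoc]
  have c : ∀ s t, s ≠ t → d s * x t = x t * d s := fun s t h => by simp [hdx, h]
  have c' : ∀ s t r, s ≠ t → d s * (x t * r) = x t * (d s * r) := fun s t r h => by
    rw [← mul_assoc, c s t h, mul_assoc]
  have e' : ∀ s r, d s * (x s * r) = x s * (d s * r) + r := fun s r => by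
    rw [← mul_assoc, hdx, if_pos rfl, add_mul, mul_assoc, one_mul]
  have n1 : a i ≠ a j := ha.ne hij
  have n2 : a k ≠ a j := ha.ne hkj
  have m : ∀ p q, b q ≠ a p := fun p q => (hab p q).symm
  -- Normal ordering: all `x` to the left of all `d`, then a fixed order within each kind.
  simp only [hE, mul_sub, sub_mul, mul_assoc]
  simp only [c _ _ (m _ _), c' _ _ _ n1.symm, c' _ _ _ n2.symm, c' _ _ _ (m _ _), e', mul_add]
  simp only [hd (b j) (b i), hd (b j) (b k), hd (b k) (b i), hd (a j) (b i), hd (a j) (b k),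
    hd (a j) (b j), hx' (a j) (a i), hx' (a j) (a k), hx' (a k) (a i), hx' (b j) (a i),
    hx' (b j) (a k)]
  abel

/-! ### Coordinate multiplications and derivatives -/

variable {ι : Type} [Fintype ι]

/-- Multiplication by the coordinate function `w ↦ w s`. -/
noncomputable def coordMul (s : ι) : Module.End ℝ 𝓢(ι → ℝ, ℂ) :=
  (SchwartzMap.smulLeftCLM (𝕜 := ℝ) ℂ (fun w : ι → ℝ => w s)).toLinearMap

theorem coordMul_apply (s : ι) (φ : 𝓢(ι → ℝ, ℂ)) (w : ι → ℝ) :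
    coordMul s φ w = w s • φ w :=
  SchwartzMap.smulLeftCLM_apply_apply
    ((ContinuousLinearMap.proj (R := ℝ) (φ := fun _ : ι => ℝ) s).hasTemperateGrowth) φ w

theorem coordMul_comm (s t : ι) : (coordMul s * coordMul t : Module.End ℝ 𝓢(ι → ℝ, ℂ)) =
    coordMul t * coordMul s := by
  ext φ w
  simp only [Module.End.mul_apply, coordMul_apply]
  rw [smul_comm]

variable [DecidableEq ι]

/-- The partial derivative in the direction of the coordinate `s`. -/
noncomputable def coordDeriv (s : ι) : Module.End ℝ 𝓢(ι → ℝ, ℂ) :=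
  (SchwartzMap.evalCLM ℝ (ι → ℝ) ℂ (Pi.single s 1) ∘L SchwartzMap.fderivCLM ℝ (ι → ℝ) ℂ).toLinearMap

theorem coordDeriv_apply (s : ι) (φ : 𝓢(ι → ℝ, ℂ)) (w : ι → ℝ) :
    coordDeriv s φ w = fderiv ℝ φ w (Pi.single s 1) := rfl

theorem coordDeriv_comm (s t : ι) : (coordDeriv s * coordDeriv t : Module.End ℝ 𝓢(ι → ℝ, ℂ)) =
    coordDeriv t * coordDeriv s := by
  ext φ w
  have hsymm := (φ.smooth 2).contDiffAt.isSymmSndFDerivAt (x := w) (by simp)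
  have key : ∀ u v : ι, coordDeriv u (coordDeriv v φ) w =
      fderiv ℝ (fderiv ℝ φ) w (Pi.single u 1) (Pi.single v 1) := fun u v => by
    rw [coordDeriv_apply]
    have h := ((SchwartzMap.fderivCLM ℝ (ι → ℝ) ℂ φ).differentiableAt (x := w)).hasFDerivAt.clm_apply
      (hasFDerivAt_const (Pi.single v (1 : ℝ)) w)
    have h' : fderiv ℝ (coordDeriv v φ) w = _ := h.fderiv
    rw [h']
    simp
    rfl
  rw [Module.End.mul_apply, Module.End.mul_apply, key, key]
  exact hsymm _ _

theorem coordDeriv_mul_coordMul (s t : ι) :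
    (coordDeriv s * coordMul t : Module.End ℝ 𝓢(ι → ℝ, ℂ)) =
      coordMul t * coordDeriv s + if s = t then 1 else 0 := by
  ext φ w
  have h := ((ContinuousLinearMap.proj (R := ℝ) (φ := fun _ : ι => ℝ) t).hasFDerivAt
    (x := w)).smul (φ.differentiableAt (x := w)).hasFDerivAt
  have hfun : ⇑(coordMul t φ) =
      ⇑(ContinuousLinearMap.proj (R := ℝ) (φ := fun _ : ι => ℝ) t) • ⇑φ :=
    funext fun w => coordMul_apply t φ w
  rw [← hfun] at h
  rw [Module.End.mul_apply, coordDeriv_apply, h.fderiv, LinearMap.add_apply, Module.End.mul_apply]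
  change _ = coordMul t (coordDeriv s φ) w + _
  rw [coordMul_apply, coordDeriv_apply]
  split_ifs with hst
  · subst hst; simp
  · simp [Ne.symm hst]
end

/-! ### Invariance under single matrices -/

section
variable {ι : Type} [Fintype ι]

/-- A square matrix as a continuous linear endomorphism of `ι → ℝ`. -/
noncomputable def matCLM (M : Matrix ι ι ℝ) : (ι → ℝ) →L[ℝ] (ι → ℝ) :=
  LinearMap.toContinuousLinearMap M.mulVecLin

theorem matCLM_apply (M : Matrix ι ι ℝ) (w : ι → ℝ) : matCLM M w = M *ᵥ w := rfl

variable [DecidableEq ι]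

theorem derivAlong_matCLM (M : Matrix ι ι ℝ) (φ : 𝓢(ι → ℝ, ℂ)) :
    derivAlong (matCLM M) φ = ∑ a, ∑ b, M a b • coordMul b (coordDeriv a φ) := by
  ext w
  have hw : M *ᵥ w = ∑ a, ∑ b, (M a b * w b) • (Pi.single a (1 : ℝ) : ι → ℝ) := by
    conv_lhs => rw [pi_eq_sum_univ' (M *ᵥ w)]
    simp only [Matrix.mulVec, dotProduct, Finset.sum_smul]
  rw [derivAlong_apply, matCLM_apply, hw, map_sum]
  simp only [map_sum, map_smul, _root_.sum_apply, _root_.smul_apply, coordMul_apply,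
    coordDeriv_apply, mul_smul]

theorem exists_comp_mulVec {M : Matrix ι ι ℝ} (hM : IsUnit M) (φ : 𝓢(ι → ℝ, ℂ)) :
    ∃ ψ : 𝓢(ι → ℝ, ℂ), ∀ w, ψ w = φ (M *ᵥ w) := by
  have hd : IsUnit M.det := (Matrix.isUnit_iff_isUnit_det M).1 hM
  let e : (ι → ℝ) ≃L[ℝ] (ι → ℝ) :=
    (LinearEquiv.ofLinearMap M.mulVecLin M⁻¹.mulVecLin
      (by ext1; simp [← Matrix.mulVecLin_mul, Matrix.mul_nonsing_inv _ hd])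
      (by ext1; simp [← Matrix.mulVecLin_mul, Matrix.nonsing_inv_mul _ hd])).toContinuousLinearEquiv
  exact ⟨SchwartzMap.compCLMOfContinuousLinearEquiv ℂ e φ, fun w => rfl⟩

/-- `T` is invariant under precomposition with the matrix `M`: `T (φ ∘ M) = T φ`. The composite
`φ ∘ M` is encoded as a Schwartz function `ψ` agreeing with it pointwise, so the condition is only
meaningful for `M` invertible. -/
def LeavesInvariant (T : 𝓢(ι → ℝ, ℂ) →L[ℂ] ℂ) (M : Matrix ι ι ℝ) : Prop :=
  ∀ φ ψ : 𝓢(ι → ℝ, ℂ), (∀ w, ψ w = φ (M *ᵥ w)) → T ψ = T φ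

theorem LeavesInvariant.one (T : 𝓢(ι → ℝ, ℂ) →L[ℂ] ℂ) : LeavesInvariant T 1 := by
  intro φ ψ h
  congr 1
  ext w
  simpa using h w

theorem LeavesInvariant.mul {T : 𝓢(ι → ℝ, ℂ) →L[ℂ] ℂ} {M N : Matrix ι ι ℝ} (hu : IsUnit M)
    (hM : LeavesInvariant T M)
    (hN : LeavesInvariant T N) : LeavesInvariant T (M * N) := by
  intro φ ψ h
  obtain ⟨χ, hχ⟩ := exists_comp_mulVec hu φ
  rw [← hM φ χ hχ]
  exact hN χ ψ fun w => by rw [h, hχ, Matrix.mulVec_mulVec]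

theorem LeavesInvariant.inv {T : 𝓢(ι → ℝ, ℂ) →L[ℂ] ℂ} {M : Matrix ι ι ℝ} (hu : IsUnit M)
    (hM : LeavesInvariant T M) :
    LeavesInvariant T M⁻¹ := by
  intro φ ψ h
  have hd : IsUnit M.det := (Matrix.isUnit_iff_isUnit_det M).1 hu
  exact (hM ψ φ fun w => by simp [h, Matrix.nonsing_inv_mul _ hd]).symm

/-- A curve of Schwartz functions representing `φ ∘ (1 + tM)` whenever `1 + tM` is invertible; for
the other `t` the value is irrelevant. -/
theorem exists_curve (M : Matrix ι ι ℝ) (φ : 𝓢(ι → ℝ, ℂ)) :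
    ∃ γ : ℝ → 𝓢(ι → ℝ, ℂ), ∀ t, IsUnit (1 + t • M) → ∀ w, γ t w = φ (w + t • matCLM M w) := by
  have : ∀ t : ℝ, ∃ ψ : 𝓢(ι → ℝ, ℂ), IsUnit (1 + t • M) → ∀ w, ψ w = φ (w + t • matCLM M w) := by
    intro t
    by_cases hu : IsUnit (1 + t • M)
    · obtain ⟨ψ, hψ⟩ := exists_comp_mulVec hu φ
      exact ⟨ψ, fun _ w => by
        rw [hψ, Matrix.add_mulVec, Matrix.one_mulVec, Matrix.smul_mulVec, matCLM_apply]⟩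
    · exact ⟨0, fun h => absurd h hu⟩
  choose γ hγ using this
  exact ⟨γ, hγ⟩

theorem eventually_det_pos {κ : Type} [Fintype κ] [DecidableEq κ] (M : Matrix κ κ ℝ) :
    ∀ᶠ t : ℝ in nhds 0, 0 < (1 + t • M).det := by
  have hc : Continuous fun t : ℝ => (1 + t • M).det := by fun_prop
  exact hc.continuousAt.eventually_const_lt (by simp)

theorem eventually_isUnit (M : Matrix ι ι ℝ) : ∀ᶠ t : ℝ in nhds 0, IsUnit (1 + t • M) :=
  (eventually_det_pos M).mono fun _ ht =>
    (Matrix.isUnit_iff_isUnit_det _).2 (isUnit_iff_ne_zero.2 (ne_of_gt ht))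

/-- Exponentiation of an infinitesimal symmetry `N` with `N² = 0`: since
`1 + (t + s) N = (1 + t N) (1 + s N)`, the function `t ↦ T (φ ∘ (1 + tN))` has zero derivative. -/
theorem inv_one_add_of_sq_zero (T : 𝓢(ι → ℝ, ℂ) →L[ℂ] ℂ) (N : Matrix ι ι ℝ) (hN : N * N = 0)
    (hT : ∀ φ, T (derivAlong (matCLM N) φ) = 0) : LeavesInvariant T (1 + N) := by
  have hu : ∀ t : ℝ, IsUnit (1 + t • N) := fun t => by
    refine IsUnit.of_mul_eq_one (1 - t • N) ?_
    simp [add_mul, mul_sub, hN]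
  intro φ ψ hψ
  obtain ⟨γ, hγ⟩ := exists_curve N φ
  have hderiv : ∀ t : ℝ, HasDerivAt (fun t => T (γ t)) 0 t := fun t => by
    have h := hasDerivAt_comp_one_add_smul T (matCLM N) (γ t) (fun s => γ (t + s))
      (Filter.Eventually.of_forall fun s w => by
        rw [hγ _ (hu _), hγ _ (hu _)]
        congr 1
        simp only [matCLM_apply, Matrix.mulVec_add, Matrix.mulVec_smul, Matrix.mulVec_mulVec, hN,
          Matrix.zero_mulVec, smul_zero, add_zero]
        module)
    rw [hT] at h
    have h2 := HasDerivAt.comp_sub_const (x := t) t (f := fun s => T (γ (t + s))) (by simpa using h)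
    simpa using h2
  have hconst := is_const_of_deriv_eq_zero (fun t => (hderiv t).differentiableAt)
    (fun t => (hderiv t).deriv) 1 0
  have h1 : γ 1 = ψ := by
    ext w
    rw [hγ _ (hu _), hψ, Matrix.add_mulVec, Matrix.one_mulVec, one_smul, matCLM_apply]
  have h0 : γ 0 = φ := by
    ext w
    simp [hγ _ (hu _)]
  simpa [h1, h0] using hconst
end

/-! ### From `gl(n)` to the unipotent symmetries -/

section
variable {n : ℕ}

/-- The infinitesimal form of the `GL⁺(n)` invariance. Comparing `φ ∘ diag(h, 1)` with
`φ ∘ diag(1, hᵀ)`, which differ by `A_h`, avoids differentiating the inverse: both are affine in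
`h = 1 + tA`. -/
theorem gl_infinitesimal (T : 𝓢(((Fin n ⊕ Fin n) → ℝ), ℂ) →L[ℂ] ℂ)
    (hT : ∀ h : Matrix (Fin n) (Fin n) ℝ, 0 < h.det →
      ∀ φ ψ : 𝓢(((Fin n ⊕ Fin n) → ℝ), ℂ),
        (∀ w : (Fin n ⊕ Fin n) → ℝ,
          ψ w = φ (Sum.elim (h⁻¹ *ᵥ fun i => w (Sum.inl i)) (hᵀ *ᵥ fun i => w (Sum.inr i)))) →
        T ψ = T φ) (A : Matrix (Fin n) (Fin n) ℝ) (φ : 𝓢(((Fin n ⊕ Fin n) → ℝ), ℂ)) :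
    T (derivAlong (matCLM (fromBlocks A 0 0 0)) φ) =
      T (derivAlong (matCLM (fromBlocks 0 0 0 Aᵀ)) φ) := by
  obtain ⟨γ₁, h₁⟩ := exists_curve (fromBlocks A 0 0 0) φ
  obtain ⟨γ₂, h₂⟩ := exists_curve (fromBlocks 0 0 0 Aᵀ) φ
  have e₁ := eventually_isUnit (fromBlocks A 0 0 (0 : Matrix (Fin n) (Fin n) ℝ))
  have e₂ := eventually_isUnit (fromBlocks (0 : Matrix (Fin n) (Fin n) ℝ) 0 0 Aᵀ)
  have d₁ := hasDerivAt_comp_one_add_smul T _ φ γ₁ (e₁.mono fun t ht => h₁ t ht)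
  have d₂ := hasDerivAt_comp_one_add_smul T _ φ γ₂ (e₂.mono fun t ht => h₂ t ht)
  refine d₁.unique (d₂.congr_of_eventuallyEq ?_)
  filter_upwards [e₁, e₂, eventually_det_pos A] with t ht₁ ht₂ hdet
  refine (hT (1 + t • A) hdet (γ₁ t) (γ₂ t) fun w => ?_).symm
  rw [h₁ t ht₁, h₂ t ht₂]
  have hinv : (1 + t • A) *ᵥ ((1 + t • A)⁻¹ *ᵥ fun i => w (Sum.inl i)) = fun i => w (Sum.inl i) := by
    rw [Matrix.mulVec_mulVec, Matrix.mul_nonsing_inv _ (isUnit_iff_ne_zero.2 hdet.ne'),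
      Matrix.one_mulVec]
  rw [Matrix.add_mulVec, Matrix.one_mulVec, Matrix.smul_mulVec] at hinv
  congr 1
  funext s
  rcases s with i | i
  · have := congrFun hinv i
    simpa [matCLM_apply, Matrix.fromBlocks_mulVec, Function.comp_def] using this.symm
  · simp [matCLM_apply, Matrix.fromBlocks_mulVec, Function.comp_def, Matrix.add_mulVec,
      Matrix.smul_mulVec]

/-- The case of an elementary matrix `A`: `T` kills `u_p ∂_{u_q} - v_q ∂_{v_p}`. -/
theorem gl_coord (T : 𝓢(((Fin n ⊕ Fin n) → ℝ), ℂ) →L[ℂ] ℂ)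
    (hA : ∀ (A : Matrix (Fin n) (Fin n) ℝ) (φ : 𝓢(((Fin n ⊕ Fin n) → ℝ), ℂ)),
      T (derivAlong (matCLM (fromBlocks A 0 0 0)) φ) =
        T (derivAlong (matCLM (fromBlocks 0 0 0 Aᵀ)) φ)) (p q : Fin n)
    (φ : 𝓢(((Fin n ⊕ Fin n) → ℝ), ℂ)) :
    T (coordMul (.inl p) (coordDeriv (.inl q) φ)) = T (coordMul (.inr q) (coordDeriv (.inr p) φ)) := by
  have h := hA (Matrix.single q p 1) φ
  simpa [derivAlong_matCLM, Matrix.single_apply, ite_and, Matrix.transpose_single, ite_smul] using h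

/-- `T` kills the rotations `x_{a i} ∂_{b k} - x_{a k} ∂_{b i}` as well; here `(a, b)` is one of the
two orderings of the pair of coordinate blocks `(u, v)`. This is where `n ≥ 3` is used. -/
theorem so_coord (hn : 3 ≤ n) (T : 𝓢(((Fin n ⊕ Fin n) → ℝ), ℂ) →L[ℂ] ℂ)
    (a b : Fin n → Fin n ⊕ Fin n) (ha : a.Injective) (hab : ∀ p q, a p ≠ b q)
    (hE : ∀ p q φ, T (coordMul (a p) (coordDeriv (a q) φ)) =
      T (coordMul (b q) (coordDeriv (b p) φ))) (i k : Fin n) (φ : 𝓢(((Fin n ⊕ Fin n) → ℝ), ℂ)) :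
    T (coordMul (a i) (coordDeriv (b k) φ)) = T (coordMul (a k) (coordDeriv (b i) φ)) := by
  obtain ⟨j, hj⟩ : ∃ j : Fin n, j ∉ ({i, k} : Finset (Fin n)) := by
    by_contra! hcon
    have := Finset.card_le_card (fun j _ => hcon j : Finset.univ ⊆ ({i, k} : Finset (Fin n)))
    have h2 := Finset.card_le_two (a := i) (b := k)
    simp at this
    omega
  simp only [Finset.mem_insert, Finset.mem_singleton, not_or] at hj
  -- The generators are kept opaque so that `T` is only split at the outer sums.
  obtain ⟨E, hEdef⟩ : ∃ E : Fin n → Fin n → Module.End ℝ 𝓢(((Fin n ⊕ Fin n) → ℝ), ℂ),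
      ∀ p q, E p q = coordMul (a p) * coordDeriv (a q) - coordMul (b q) * coordDeriv (b p) :=
    ⟨_, fun _ _ => rfl⟩
  have hid := weyl_identity (fun s => coordMul s) (fun s => coordDeriv s) coordMul_comm
    coordDeriv_comm coordDeriv_mul_coordMul a b ha hab (Ne.symm hj.1) (Ne.symm hj.2) E hEdef
  have hE' : ∀ p q (r : Module.End ℝ 𝓢(((Fin n ⊕ Fin n) → ℝ), ℂ)), T ((E p q * r) φ) = 0 :=
    fun p q r => by
      rw [hEdef, Module.End.mul_apply, LinearMap.sub_apply, map_sub, Module.End.mul_apply,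
        Module.End.mul_apply, hE, sub_self]
  have hφ := congrArg T (LinearMap.congr_fun hid φ)
  simp only [LinearMap.add_apply, LinearMap.sub_apply, map_add, map_sub, hE'] at hφ
  simpa [sub_eq_zero] using hφ

theorem sum_skew_mul_symm (Y : Matrix (Fin n) (Fin n) ℝ) (hY : Yᵀ = -Y) (f : Fin n → Fin n → ℂ)
    (hf : ∀ i j, f i j = f j i) : ∑ i, ∑ j, Y i j • f i j = 0 := by
  have h : ∑ i, ∑ j, Y i j • f i j = -∑ i, ∑ j, Y i j • f i j := by
    conv_lhs => rw [Finset.sum_comm]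
    simp only [← Finset.sum_neg_distrib]
    refine Finset.sum_congr rfl fun i _ => Finset.sum_congr rfl fun j _ => ?_
    have : Y j i = -Y i j := congrFun (congrFun hY i) j
    rw [this, hf, neg_smul]
  exact self_eq_neg.1 h

theorem T_real_smul {E : Type} [NormedAddCommGroup E] [NormedSpace ℝ E] (T : 𝓢(E, ℂ) →L[ℂ] ℂ)
    (c : ℝ) (φ : 𝓢(E, ℂ)) : T (c • φ) = c • T φ :=
  (T.restrictScalars ℝ).map_smul c φ

theorem inv_upper (T : 𝓢(((Fin n ⊕ Fin n) → ℝ), ℂ) →L[ℂ] ℂ)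
    (hL : ∀ i k φ, T (coordMul (.inr i) (coordDeriv (.inl k) φ)) =
      T (coordMul (.inr k) (coordDeriv (.inl i) φ)))
    (Y : Matrix (Fin n) (Fin n) ℝ) (hY : Yᵀ = -Y) : LeavesInvariant T (fromBlocks 1 Y 0 1) := by
  have h := inv_one_add_of_sq_zero T (fromBlocks 0 Y 0 0) (by simp [fromBlocks_multiply])
    (fun φ => by
      rw [derivAlong_matCLM]
      simp only [Fintype.sum_sum_type, fromBlocks_apply₁₁, fromBlocks_apply₁₂, fromBlocks_apply₂₁,
        fromBlocks_apply₂₂, Matrix.zero_apply, zero_smul, Finset.sum_const_zero, zero_add, add_zero,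
        map_sum, T_real_smul]
      exact sum_skew_mul_symm Y hY _ fun i j => hL j i φ)
  rwa [← fromBlocks_one, fromBlocks_add, add_zero, add_zero, zero_add] at h

theorem inv_lower (T : 𝓢(((Fin n ⊕ Fin n) → ℝ), ℂ) →L[ℂ] ℂ)
    (hL : ∀ i k φ, T (coordMul (.inl i) (coordDeriv (.inr k) φ)) =
      T (coordMul (.inl k) (coordDeriv (.inr i) φ)))
    (X : Matrix (Fin n) (Fin n) ℝ) (hX : Xᵀ = -X) : LeavesInvariant T (fromBlocks 1 0 X 1) := by
  have h := inv_one_add_of_sq_zero T (fromBlocks 0 0 X 0) (by simp [fromBlocks_multiply])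
    (fun φ => by
      rw [derivAlong_matCLM]
      simp only [Fintype.sum_sum_type, fromBlocks_apply₁₁, fromBlocks_apply₁₂, fromBlocks_apply₂₁,
        fromBlocks_apply₂₂, Matrix.zero_apply, zero_smul, Finset.sum_const_zero, zero_add, add_zero,
        map_sum, T_real_smul]
      exact sum_skew_mul_symm X hX _ fun i j => hL j i φ)
  rwa [← fromBlocks_one, fromBlocks_add, add_zero, add_zero, zero_add] at h

/-! ### Factorization of orthogonal matrices near the identity -/

theorem Q1_elim (u v : Fin n → ℝ) : Q1 n (Sum.elim u v) = u ⬝ᵥ v := rfl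

theorem Q1_blocks {A B C D : Matrix (Fin n) (Fin n) ℝ}
    (hQ : ∀ w, Q1 n (fromBlocks A B C D *ᵥ w) = Q1 n w) (u v : Fin n → ℝ) :
    (A *ᵥ u + B *ᵥ v) ⬝ᵥ (C *ᵥ u + D *ᵥ v) = u ⬝ᵥ v := by
  have h := hQ (Sum.elim u v)
  rw [Matrix.fromBlocks_mulVec] at h
  simpa [Q1_elim] using h

theorem skew_of_quadratic_zero (S : Matrix (Fin n) (Fin n) ℝ) (h : ∀ u, u ⬝ᵥ S *ᵥ u = 0) :
    Sᵀ = -S := by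
  ext i j
  have hi := h (Pi.single i 1)
  have hj := h (Pi.single j 1)
  have hij := h (Pi.single i 1 + Pi.single j 1)
  simp [Matrix.mulVec_add] at hi hj hij
  simp
  linarith

theorem orthogonal_block_relations {A B C D : Matrix (Fin n) (Fin n) ℝ}
    (hQ : ∀ w, Q1 n (fromBlocks A B C D *ᵥ w) = Q1 n w) :
    (Aᵀ * C)ᵀ = -(Aᵀ * C) ∧ (Bᵀ * D)ᵀ = -(Bᵀ * D) ∧ Aᵀ * D + Cᵀ * B = 1 := by
  have hb := Q1_blocks hQ
  have mv : ∀ (P R : Matrix (Fin n) (Fin n) ℝ) (u v : Fin n → ℝ),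
      (P *ᵥ u) ⬝ᵥ (R *ᵥ v) = u ⬝ᵥ (Pᵀ * R) *ᵥ v := fun P R u v => by
    rw [← Matrix.mulVec_mulVec, Matrix.dotProduct_mulVec u, Matrix.vecMul_transpose]
  have h1 : ∀ u, u ⬝ᵥ (Aᵀ * C) *ᵥ u = 0 := fun u => by
    simpa [mv] using hb u 0
  have h2 : ∀ v, v ⬝ᵥ (Bᵀ * D) *ᵥ v = 0 := fun v => by
    simpa [mv] using hb 0 v
  refine ⟨skew_of_quadratic_zero _ h1, skew_of_quadratic_zero _ h2, ?_⟩
  have h3 : ∀ u v, u ⬝ᵥ (Aᵀ * D + Cᵀ * B) *ᵥ v = u ⬝ᵥ v := fun u v => by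
    have := hb u v
    rw [add_dotProduct, dotProduct_add, dotProduct_add, dotProduct_comm (B *ᵥ v) (C *ᵥ u), mv, mv,
      mv, mv, h1, h2] at this
    rw [Matrix.add_mulVec, dotProduct_add]
    linarith
  ext i j
  have := h3 (Pi.single i 1) (Pi.single j 1)
  simpa [Matrix.one_apply, Pi.single_apply, eq_comm] using this

/-- The big cell: an element of `O(Q₁)` whose upper left block `A` has positive determinant is the
product of a lower unipotent, a block diagonal and an upper unipotent element, each of which leaves
`T` invariant. -/
theorem inv_of_det_pos (T : 𝓢(((Fin n ⊕ Fin n) → ℝ), ℂ) →L[ℂ] ℂ)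
    (hdiag : ∀ A : Matrix (Fin n) (Fin n) ℝ, 0 < A.det → LeavesInvariant T (fromBlocks A 0 0 (A⁻¹)ᵀ))
    (hup : ∀ Y : Matrix (Fin n) (Fin n) ℝ, Yᵀ = -Y → LeavesInvariant T (fromBlocks 1 Y 0 1))
    (hlow : ∀ X : Matrix (Fin n) (Fin n) ℝ, Xᵀ = -X → LeavesInvariant T (fromBlocks 1 0 X 1))
    {A B C D : Matrix (Fin n) (Fin n) ℝ} (hA : 0 < A.det)
    (hQ : ∀ w, Q1 n (fromBlocks A B C D *ᵥ w) = Q1 n w) : LeavesInvariant T (fromBlocks A B C D) := by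
  obtain ⟨r1, r2, r3⟩ := orthogonal_block_relations hQ
  have hu : IsUnit A.det := isUnit_iff_ne_zero.2 hA.ne'
  have i1 : A * A⁻¹ = 1 := Matrix.mul_nonsing_inv _ hu
  have i2 : A⁻¹ * A = 1 := Matrix.nonsing_inv_mul _ hu
  have i3 : (A⁻¹)ᵀ * Aᵀ = 1 := by rw [← Matrix.transpose_mul, i1, Matrix.transpose_one]
  have r1' : Cᵀ * A = -(Aᵀ * C) := by simpa using r1
  have hX : (C * A⁻¹)ᵀ = -(C * A⁻¹) := by
    calc (C * A⁻¹)ᵀ = (A⁻¹)ᵀ * (Cᵀ * A) * A⁻¹ := by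
          rw [Matrix.transpose_mul, Matrix.mul_assoc, Matrix.mul_assoc, i1, Matrix.mul_one]
      _ = -(((A⁻¹)ᵀ * Aᵀ) * (C * A⁻¹)) := by rw [r1']; noncomm_ring
      _ = _ := by rw [i3, Matrix.one_mul]
  have hD : D = C * A⁻¹ * B + (A⁻¹)ᵀ := by
    calc D = (A⁻¹)ᵀ * (Aᵀ * D) := by rw [← Matrix.mul_assoc, i3, Matrix.one_mul]
      _ = (A⁻¹)ᵀ * (1 - Cᵀ * B) := by rw [← r3]; abel_nf
      _ = (A⁻¹)ᵀ - (C * A⁻¹)ᵀ * B := by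
          rw [Matrix.mul_sub, Matrix.mul_one, Matrix.transpose_mul, Matrix.mul_assoc]
      _ = _ := by rw [hX]; noncomm_ring
  have hY : (A⁻¹ * B)ᵀ = -(A⁻¹ * B) := by
    have e1 : Bᵀ * D = Bᵀ * (C * A⁻¹) * B + (A⁻¹ * B)ᵀ := by
      rw [hD, Matrix.transpose_mul]; noncomm_ring
    have e2 : (Bᵀ * (C * A⁻¹) * B)ᵀ = -(Bᵀ * (C * A⁻¹) * B) := by
      rw [Matrix.transpose_mul, Matrix.transpose_mul, hX, Matrix.transpose_transpose]; noncomm_ring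
    rw [e1, Matrix.transpose_add, e2, Matrix.transpose_transpose, neg_add] at r2
    exact (neg_eq_iff_eq_neg.2 (add_left_cancel r2)).symm
  have hdec : fromBlocks A B C D = fromBlocks 1 0 (C * A⁻¹) 1 *
      (fromBlocks A 0 0 (A⁻¹)ᵀ * fromBlocks 1 (A⁻¹ * B) 0 1) := by
    have q1 : A * (A⁻¹ * B) = B := by rw [← Matrix.mul_assoc, i1, Matrix.one_mul]
    have q2 : C * A⁻¹ * A = C := by rw [Matrix.mul_assoc, i2, Matrix.mul_one]
    simp only [fromBlocks_multiply, Matrix.mul_zero, Matrix.zero_mul, Matrix.one_mul,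
      Matrix.mul_one, add_zero, zero_add, q1, q2]
    rw [← hD]
  rw [hdec]
  refine LeavesInvariant.mul ?_ (hlow _ hX) (LeavesInvariant.mul ?_ (hdiag A hA) (hup _ hY))
  · refine (Matrix.isUnit_iff_isUnit_det _).2 ?_
    simp
  · refine (Matrix.isUnit_iff_isUnit_det _).2 ?_
    rw [Matrix.det_fromBlocks_zero₂₁, Matrix.det_transpose, ← Matrix.det_mul, i1]
    simp
end

/-- for `n ≥ 3`, every tempered distribution on `ℝⁿ × ℝⁿ ≅ ℝ^{2n}` that is
invariant under `(u, v) ↦ (h u, (hᵀ)⁻¹ v)` for all `h ∈ GL⁺(n, ℝ)` (i.e. `T(φ ∘ A_h) = T(φ)`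
with `A_h(u, v) = (h⁻¹ u, hᵀ v)`) is invariant under the identity component of `O(Q₁)`. -/
theorem tempered_distribution_extra_symmetry (n : ℕ) (hn : 3 ≤ n)
    (T : 𝓢(((Fin n ⊕ Fin n) → ℝ), ℂ) →L[ℂ] ℂ)
    (hT : ∀ h : Matrix (Fin n) (Fin n) ℝ, 0 < h.det →
      ∀ φ ψ : 𝓢(((Fin n ⊕ Fin n) → ℝ), ℂ),
        (∀ w : (Fin n ⊕ Fin n) → ℝ,
          ψ w = φ (Sum.elim (h⁻¹ *ᵥ fun i => w (Sum.inl i)) (hᵀ *ᵥ fun i => w (Sum.inr i)))) →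
        T ψ = T φ) :
    ∀ M ∈ connectedComponentIn (OQ1 n) 1,
      ∀ φ ψ : 𝓢(((Fin n ⊕ Fin n) → ℝ), ℂ),
        (∀ w : (Fin n ⊕ Fin n) → ℝ, ψ w = φ (M⁻¹ *ᵥ w)) → T ψ = T φ := by
  have hgl := gl_coord T (gl_infinitesimal T hT)
  have hup := inv_upper T (so_coord hn T .inr .inl Sum.inr_injective (by simp)
    fun p q φ => (hgl q p φ).symm)
  have hlow := inv_lower T (so_coord hn T .inl .inr Sum.inl_injective (by simp) hgl)
  have hdiag : ∀ A : Matrix (Fin n) (Fin n) ℝ, 0 < A.det → LeavesInvariant T (fromBlocks A 0 0 (A⁻¹)ᵀ) := by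
    intro A hA φ ψ hψ
    refine hT A⁻¹ ?_ φ ψ fun w => ?_
    · rw [Matrix.det_nonsing_inv, Ring.inverse_eq_inv']
      exact inv_pos.2 hA
    · rw [hψ, Matrix.fromBlocks_mulVec,
        Matrix.nonsing_inv_nonsing_inv _ (isUnit_iff_ne_zero.2 hA.ne')]
      simp [Function.comp_def]
  have hone : (1 : Matrix (Fin n ⊕ Fin n) (Fin n ⊕ Fin n) ℝ) ∈ OQ1 n := ⟨isUnit_one, by simp⟩
  have hsub := connectedComponentIn_subset (OQ1 n) 1
  intro M hM
  have hiff : LeavesInvariant T 1 ↔ LeavesInvariant T M := by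
    refine isPreconnected_connectedComponentIn.induction₂ (fun M M' => LeavesInvariant T M ↔ LeavesInvariant T M') ?_
      (fun _ _ _ _ _ _ h h' => h.trans h') (fun _ _ _ _ h => h.symm)
      (mem_connectedComponentIn hone) hM
    -- Locally around `M` the quotient `M⁻¹ M'` lies in the big cell.
    intro M hM
    obtain ⟨hMu, hMQ⟩ := hsub hM
    have hd : IsUnit M.det := (Matrix.isUnit_iff_isUnit_det M).1 hMu
    have hc : Continuous fun M' => (M⁻¹ * M').toBlocks₁₁.det := by
      refine Continuous.matrix_det ?_
      exact continuous_matrix fun i j =>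
        (continuous_const.matrix_mul continuous_id).matrix_elem (Sum.inl i) (Sum.inl j)
    have hev : ∀ᶠ M' in nhdsWithin M (connectedComponentIn (OQ1 n) 1),
        0 < (M⁻¹ * M').toBlocks₁₁.det := by
      refine (hc.continuousAt.eventually_const_lt ?_).filter_mono nhdsWithin_le_nhds
      change 0 < (M⁻¹ * M).toBlocks₁₁.det
      rw [Matrix.nonsing_inv_mul _ hd, ← fromBlocks_one, toBlocks_fromBlocks₁₁]
      simp
    filter_upwards [hev, self_mem_nhdsWithin] with M' hM' hmem
    obtain ⟨hMu', hMQ'⟩ := hsub hmem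
    have hMK : M * (M⁻¹ * M') = M' := by
      rw [← Matrix.mul_assoc, Matrix.mul_nonsing_inv _ hd, Matrix.one_mul]
    have hKu : IsUnit (M⁻¹ * M') := ((Matrix.isUnit_nonsing_inv_iff).2 hMu).mul hMu'
    have hK : LeavesInvariant T (M⁻¹ * M') := by
      rw [← fromBlocks_toBlocks (M⁻¹ * M')]
      refine inv_of_det_pos T hdiag hup hlow hM' fun w => ?_
      rw [fromBlocks_toBlocks, ← hMQ, Matrix.mulVec_mulVec, hMK, hMQ']
    constructor
    · intro h
      rw [← hMK]
      exact h.mul hMu hK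
    · intro h
      have : M = M' * (M⁻¹ * M')⁻¹ := by
        have hKK := Matrix.mul_nonsing_inv _ ((Matrix.isUnit_iff_isUnit_det _).1 hKu)
        calc M = M * ((M⁻¹ * M') * (M⁻¹ * M')⁻¹) := by rw [hKK, Matrix.mul_one]
          _ = _ := by rw [← Matrix.mul_assoc, hMK]
      rw [this]
      exact h.mul hMu' (hK.inv hKu)
  exact (hiff.1 (LeavesInvariant.one T)).inv (hsub hM).1
end

section
/- Let n ≥ 3, G = SL(n+1,ℝ), and H = {diag((det h)⁻¹, h) : h ∈ GL(n,ℝ), det h > 0}. Every continuous function f : G → ℝ that is bi-invariant under H (i.e. f(h₁ g h₂) = f(g) for all h₁,h₂ ∈ H, g ∈ G) satisfies f(gᵀ) = f(g) for all g ∈ G. -/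
/-!
Write `g` in blocks as `(a, bᵀ; c, D)`. If some `k ∈ H` makes `k * g` symmetric, then
`f g = f (k * g) = f (gᵀ * kᵀ) = f gᵀ`, because `kᵀ ∈ H` too (`f_transpose_of_symm`).

For `D` invertible, look for `k = diag(1, X)` with `det X = 1`: the product `k * g` has blocks
`(a, bᵀ; X c, X D)`, so it is symmetric as soon as `S = X D` is symmetric with `S v = b`, where
`v = D⁻¹ c`, and `det S = det D`. Such an `S` exists for generic `(v, b)`
(`exists_symm_mulVec_det`): the diagonal matrix with entries `b i / v i` maps `v` to `b`, and adding
a multiple of `u uᵀ` with `u ⟂ v` adjusts its determinant to any prescribed value.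

Genericity means non-vanishing of the polynomial `genPoly` in the entries of `g`. Its
non-vanishing locus is dense in `SL(n+1, ℝ)` (`mem_closure_generic`): move from `g` along a line to
a matrix where `genPoly` does not vanish, and divide the first row by the determinant. The set where
`f gᵀ = f g` is closed, hence is everything.
-/

open Matrix

/-- The subgroup `H = {diag((det h)⁻¹, h) : h ∈ GL(n, ℝ), det h > 0} ≅ GL⁺(n, ℝ)`
of `SL(n+1, ℝ)`, as a set. -/
def Hset (n : ℕ) : Set (Matrix.SpecialLinearGroup (Fin (n + 1)) ℝ) :=
  {g | ∃ h : Matrix (Fin n) (Fin n) ℝ, 0 < h.det ∧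
    (g : Matrix (Fin (n + 1)) (Fin (n + 1)) ℝ) = diagBlock (h.det)⁻¹ h}


/-- `SL(n+1, ℝ)` is by definition a subtype of the space of matrices; we endow it with the
subspace topology (as a matrix group). -/
instance (N : ℕ) : TopologicalSpace (Matrix.SpecialLinearGroup (Fin N) ℝ) :=
  show TopologicalSpace {A : Matrix (Fin N) (Fin N) ℝ // A.det = 1} from inferInstance

/-- A symmetric matrix with `S v = b` and prescribed determinant `d`, for `v`, `b` in general
position. -/
lemma exists_symm_mulVec_det {n : ℕ} (i j : Fin n) (hij : i ≠ j) (v b : Fin n → ℝ)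
    (hv : ∀ k, v k ≠ 0) (hb : ∀ k, b k ≠ 0) (hvb : b i * v i + b j * v j ≠ 0) (d : ℝ) :
    ∃ S : Matrix (Fin n) (Fin n) ℝ, Sᵀ = S ∧ S *ᵥ v = b ∧ S.det = d := by
  set y : Fin n → ℝ := fun k => b k / v k with hy
  have hy0 : ∀ k, y k ≠ 0 := fun k => div_ne_zero (hb k) (hv k)
  set u : Fin n → ℝ := Pi.single i (v j) - Pi.single j (v i) with hu
  have huv : u ⬝ᵥ v = 0 := by
    simp [hu, sub_dotProduct]; ring
  set σ : ℝ := u ⬝ᵥ (fun k => (y k)⁻¹ * u k) with hσ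
  have hσ0 : σ ≠ 0 := by
    have : σ = v i * v j * (b i * v i + b j * v j) / (b i * b j) := by
      have h1 := hb i
      have h2 := hb j
      simp [hσ, hu, hy, sub_dotProduct, hij, hij.symm]
      field_simp
      ring
    rw [this]
    exact div_ne_zero (mul_ne_zero (mul_ne_zero (hv i) (hv j)) hvb) (mul_ne_zero (hb i) (hb j))
  have hp : (∏ k, y k) ≠ 0 := Finset.prod_ne_zero_iff.mpr fun k _ => hy0 k
  set lam : ℝ := (d / (∏ k, y k) - 1) / σ with hlam
  refine ⟨diagonal y + vecMulVec (lam • u) u, ?_, ?_, ?_⟩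
  · ext k l
    rcases eq_or_ne k l with rfl | hkl
    · rfl
    · simp [vecMulVec_apply, hkl, hkl.symm, mul_comm (u k)]
  · rw [add_mulVec, vecMulVec_mulVec, huv]
    ext k
    simp [mulVec_diagonal, hy, hv k]
  · have hfac : diagonal y + vecMulVec (lam • u) u
        = diagonal y * (1 + vecMulVec (fun k => (y k)⁻¹ * (lam * u k)) u) := by
      rw [mul_add, mul_one]
      congr 1
      ext k l
      have := hy0 k
      simp only [diagonal_mul, vecMulVec_apply, Pi.smul_apply, smul_eq_mul]
      field_simp
    rw [hfac, det_mul, det_diagonal]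
    have hdet : (1 + vecMulVec (fun k => (y k)⁻¹ * (lam * u k)) u).det = 1 + lam * σ := by
      rw [vecMulVec_eq Unit, det_one_add_replicateCol_mul_replicateRow, hσ, dotProduct, dotProduct,
        Finset.mul_sum]
      congr 1
      exact Finset.sum_congr rfl fun k _ => by ring
    rw [hdet, hlam]
    field_simp
    ring

lemma det_diagBlock_one {n : ℕ} (X : Matrix (Fin n) (Fin n) ℝ) : (diagBlock 1 X).det = X.det := by
  rw [det_succ_row_zero, Fin.sum_univ_succ]
  simp [diagBlock]
  rfl

lemma diagBlock_transpose {n : ℕ} (a : ℝ) (X : Matrix (Fin n) (Fin n) ℝ) :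
    (diagBlock a X)ᵀ = diagBlock a Xᵀ := by
  ext i j
  refine Fin.cases ?_ (fun i => ?_) i <;> refine Fin.cases ?_ (fun j => ?_) j <;>
    simp [diagBlock]

lemma f_transpose_of_symm {n : ℕ} (f : Matrix.SpecialLinearGroup (Fin (n + 1)) ℝ → ℝ)
    (hfinv : ∀ g : Matrix.SpecialLinearGroup (Fin (n + 1)) ℝ,
      ∀ h₁ ∈ Hset n, ∀ h₂ ∈ Hset n, f (h₁ * g * h₂) = f g)
    (g : Matrix.SpecialLinearGroup (Fin (n + 1)) ℝ) (X : Matrix (Fin n) (Fin n) ℝ)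
    (hX : X.det = 1) (hsymm : (diagBlock 1 X * g.1)ᵀ = diagBlock 1 X * g.1) :
    f g.transpose = f g := by
  have one_mem : (1 : Matrix.SpecialLinearGroup (Fin (n + 1)) ℝ) ∈ Hset n := by
    refine ⟨1, by simp, ?_⟩
    ext i j
    refine Fin.cases ?_ (fun i => ?_) i <;> refine Fin.cases ?_ (fun j => ?_) j <;>
      simp [diagBlock, one_apply, Fin.succ_ne_zero, (Fin.succ_ne_zero _).symm]
  let k : Matrix.SpecialLinearGroup (Fin (n + 1)) ℝ :=
    ⟨diagBlock 1 X, by rw [det_diagBlock_one, hX]⟩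
  have hk : k ∈ Hset n := ⟨X, by simp [hX], by simp [hX, k]⟩
  have hkt : k.transpose ∈ Hset n := by
    refine ⟨Xᵀ, by simp [hX], ?_⟩
    rw [det_transpose, hX, inv_one, ← diagBlock_transpose]
    rfl
  have h1 := hfinv g k hk 1 one_mem
  have h2 := hfinv g.transpose 1 one_mem k.transpose hkt
  rw [← h1, ← h2]
  congr 1
  apply Subtype.ext
  change 1 * g.1ᵀ * (diagBlock 1 X)ᵀ = diagBlock 1 X * g.1 * 1
  rw [one_mul, mul_one, ← hsymm, transpose_mul]

/-- The vector `adj(D) c` attached to the block matrix `(a, bᵀ; c, D)`; it equals `det D • D⁻¹ c`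
when `D` is invertible. -/
def adjVec {R : Type*} [CommRing R] {n : ℕ} (A : Matrix (Fin (n + 1)) (Fin (n + 1)) R) :
    Fin n → R :=
  (A.submatrix Fin.succ Fin.succ).adjugate *ᵥ fun k => A k.succ 0

/-- The polynomial in the entries of `A = (a, bᵀ; c, D)` whose non-vanishing expresses that
`D` is invertible and that `b` and `adj(D) c` are in general position. It is defined over an arbitrary
commutative ring in order to be evaluated on matrices with polynomial entries. -/
def genPoly {R : Type*} [CommRing R] {n : ℕ} (i j : Fin n)
    (A : Matrix (Fin (n + 1)) (Fin (n + 1)) R) : R :=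
  (A.submatrix Fin.succ Fin.succ).det * (∏ k : Fin n, A 0 k.succ) * (∏ k, adjVec A k) *
    (A 0 i.succ * adjVec A i + A 0 j.succ * adjVec A j)

lemma adjVec_map {R R' : Type*} [CommRing R] [CommRing R'] (φ : R →+* R') {n : ℕ}
    (A : Matrix (Fin (n + 1)) (Fin (n + 1)) R) (k : Fin n) :
    adjVec (A.map φ) k = φ (adjVec A k) := by
  have h := RingHom.map_adjugate φ (A.submatrix Fin.succ Fin.succ)
  rw [RingHom.mapMatrix_apply, RingHom.mapMatrix_apply] at h
  rw [adjVec, adjVec, RingHom.map_mulVec, h]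
  rfl

lemma genPoly_map {R R' : Type*} [CommRing R] [CommRing R'] (φ : R →+* R') {n : ℕ} (i j : Fin n)
    (A : Matrix (Fin (n + 1)) (Fin (n + 1)) R) :
    genPoly i j (A.map φ) = φ (genPoly i j A) := by
  have h := RingHom.map_det φ (A.submatrix Fin.succ Fin.succ)
  simp only [genPoly, map_mul, map_prod, map_add, adjVec_map, h]
  rfl

/-- Rescaling the first row of `A` affects neither `c` nor `D`, and rescales `b`. -/
lemma genPoly_updateRow_ne_zero {n : ℕ} (i j : Fin n)
    (A : Matrix (Fin (n + 1)) (Fin (n + 1)) ℝ) (r : ℝ) (hr : r ≠ 0) (hA : genPoly i j A ≠ 0) :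
    genPoly i j (A.updateRow 0 (r • A 0)) ≠ 0 := by
  have hD : (A.updateRow 0 (r • A 0)).submatrix Fin.succ Fin.succ
      = A.submatrix Fin.succ Fin.succ := by
    ext k l; simp
  have hw : adjVec (A.updateRow 0 (r • A 0)) = adjVec A := by
    unfold adjVec
    rw [hD]
    simp
  have : genPoly i j (A.updateRow 0 (r • A 0)) = r ^ n * r * genPoly i j A := by
    unfold genPoly
    rw [hD, hw]
    simp [Finset.prod_mul_distrib]
    ring
  rw [this]
  exact mul_ne_zero (mul_ne_zero (pow_ne_zero _ hr) hr) hA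

lemma f_transpose_of_generic {n : ℕ} (i j : Fin n) (hij : i ≠ j)
    (f : Matrix.SpecialLinearGroup (Fin (n + 1)) ℝ → ℝ)
    (hfinv : ∀ g : Matrix.SpecialLinearGroup (Fin (n + 1)) ℝ,
      ∀ h₁ ∈ Hset n, ∀ h₂ ∈ Hset n, f (h₁ * g * h₂) = f g)
    (g : Matrix.SpecialLinearGroup (Fin (n + 1)) ℝ) (hg : genPoly i j g.1 ≠ 0) :
    f g.transpose = f g := by
  set D := g.1.submatrix Fin.succ Fin.succ with hD
  set b : Fin n → ℝ := fun k => g.1 0 k.succ with hb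
  set c : Fin n → ℝ := fun k => g.1 k.succ 0 with hc
  set w := adjVec g.1 with hw
  have hg' : D.det * (∏ k, b k) * (∏ k, w k) * (b i * w i + b j * w j) ≠ 0 := hg
  obtain ⟨h, h4⟩ := mul_ne_zero_iff.mp hg'
  obtain ⟨h, h3⟩ := mul_ne_zero_iff.mp h
  obtain ⟨h1, h2⟩ := mul_ne_zero_iff.mp h
  have hDu : IsUnit D.det := isUnit_iff_ne_zero.mpr h1
  have hv : ∀ k, (D⁻¹ *ᵥ c) k = D.det⁻¹ * w k := by
    intro k
    rw [inv_def, Ring.inverse_eq_inv', smul_mulVec]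
    rfl
  obtain ⟨S, hSs, hSv, hSd⟩ := exists_symm_mulVec_det i j hij (D⁻¹ *ᵥ c) b
    (fun k => by
      rw [hv]
      exact mul_ne_zero (inv_ne_zero h1) (Finset.prod_ne_zero_iff.mp h3 k (Finset.mem_univ k)))
    (fun k => Finset.prod_ne_zero_iff.mp h2 k (Finset.mem_univ k))
    (by
      rw [hv, hv]
      have : b i * (D.det⁻¹ * w i) + b j * (D.det⁻¹ * w j)
        = D.det⁻¹ * (b i * w i + b j * w j) := by ring
      rw [this]
      exact mul_ne_zero (inv_ne_zero h1) h4) D.det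
  refine f_transpose_of_symm f hfinv g (S * D⁻¹) ?_ ?_
  · rw [det_mul, hSd, ← det_mul, mul_nonsing_inv _ hDu, det_one]
  · have hXc : ∀ k, ∑ l, (S * D⁻¹) k l * g.1 l.succ 0 = b k := by
      intro k
      have := congrFun hSv k
      rw [mulVec_mulVec] at this
      exact this
    have hXD : ∀ k m, ∑ l, (S * D⁻¹) k l * g.1 l.succ m.succ = S k m := by
      intro k m
      have : S * D⁻¹ * D = S := nonsing_inv_mul_cancel_right _ _ hDu
      exact congrFun (congrFun this k) m
    have hST : ∀ k m, S k m = S m k := fun k m => congrFun (congrFun hSs m) k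
    ext k m
    rw [transpose_apply, mul_apply, mul_apply, Fin.sum_univ_succ, Fin.sum_univ_succ]
    refine Fin.cases ?_ (fun k => ?_) k <;> refine Fin.cases ?_ (fun m => ?_) m
    · rfl
    · simp [diagBlock, hXc, hb]
    · simp [diagBlock, hXc, hb]
    · simp only [diagBlock, of_apply, Fin.cases_succ, Fin.cases_zero, zero_mul, zero_add, hXD]
      exact hST m k

/-- A matrix (not of determinant one) where `genPoly` does not vanish: `b = c = (1, …, 1)` and
`D = 1`. -/
def basePoint (n : ℕ) : Matrix (Fin (n + 1)) (Fin (n + 1)) ℝ :=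
  Matrix.of fun k l => if k = 0 ∨ l = 0 ∨ k = l then 1 else 0

lemma genPoly_basePoint {n : ℕ} (i j : Fin n) : genPoly i j (basePoint n) ≠ 0 := by
  have hD : (basePoint n).submatrix Fin.succ Fin.succ = 1 := by
    ext k l
    simp [basePoint, one_apply, Fin.succ_ne_zero]
  have hw : ∀ k, adjVec (basePoint n) k = 1 := by
    intro k
    rw [adjVec, hD]
    simp [basePoint]
  simp only [genPoly, hD, hw]
  simp [basePoint]

open Polynomial Filter Topology in
lemma mem_closure_generic {n : ℕ} (i j : Fin n)
    (g : Matrix.SpecialLinearGroup (Fin (n + 1)) ℝ) :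
    g ∈ closure {x : Matrix.SpecialLinearGroup (Fin (n + 1)) ℝ | genPoly i j x.1 ≠ 0} := by
  -- the line from `g` to the base point, over `ℝ[X]` and as a function of a real parameter
  let L : Matrix (Fin (n + 1)) (Fin (n + 1)) ℝ[X] :=
    Matrix.of fun k l => C (g.1 k l) + X * C (basePoint n k l - g.1 k l)
  let M : ℝ → Matrix (Fin (n + 1)) (Fin (n + 1)) ℝ := fun t => g.1 + t • (basePoint n - g.1)
  have hLM : ∀ t, L.map (evalRingHom t) = M t := by
    intro t
    ext k l
    simp [L, M]
  have hev : ∀ t, genPoly i j (M t) = (genPoly i j L).eval t := by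
    intro t
    rw [← hLM, genPoly_map, coe_evalRingHom]
  have hP : genPoly i j L ≠ 0 := by
    intro h0
    have h1 := hev 1
    rw [h0, eval_zero] at h1
    exact genPoly_basePoint i j (by simpa [M] using h1)
  have hMc : Continuous M := by fun_prop
  have hM0 : M 0 = g.1 := by simp [M]
  have hdet : Continuous fun t => (M t).det := hMc.matrix_det
  have hdet0 : (M 0).det = 1 := by rw [hM0]; exact g.2
  let N : ℝ → Matrix (Fin (n + 1)) (Fin (n + 1)) ℝ :=
    fun t => (M t).updateRow 0 ((M t).det⁻¹ • M t 0)
  have hN0 : N 0 = g.1 := by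
    simp only [N]
    rw [hdet0, inv_one, one_smul, updateRow_eq_self, hM0]
  have hNc : Tendsto N (𝓝[≠] 0) (𝓝 g.1) := by
    rw [← hN0]
    refine Tendsto.mono_left ?_ nhdsWithin_le_nhds
    have hinv : ContinuousAt (fun t => (M t).det⁻¹) 0 :=
      hdet.continuousAt.inv₀ (by rw [hdet0]; exact one_ne_zero)
    have hrow : ContinuousAt (fun t => M t 0) 0 :=
      ((continuous_apply 0).comp hMc).continuousAt
    exact ContinuousAt.update hMc.continuousAt 0 (hinv.smul hrow)
  refine closure_subtype.mpr (mem_closure_of_tendsto hNc ?_)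
  have hroots : ∀ᶠ t in 𝓝[≠] (0 : ℝ), (genPoly i j L).eval t ≠ 0 := by
    have hfin := (genPoly i j L).roots.toFinset.finite_toSet
    -- the roots other than `0` form a finite, hence closed, set not containing `0`
    have h2 := (hfin.subset (Set.sdiff_subset (t := {0}))).isClosed.isOpen_compl.mem_nhds
      (x := (0 : ℝ)) (by simp)
    filter_upwards [nhdsWithin_le_nhds h2, self_mem_nhdsWithin] with t ht ht0 hroot
    exact ht ⟨by simp [hP, hroot], ht0⟩
  have hdet_ne : ∀ᶠ t in 𝓝[≠] (0 : ℝ), (M t).det ≠ 0 :=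
    nhdsWithin_le_nhds (hdet.continuousAt.eventually_ne (by rw [hdet0]; exact one_ne_zero))
  filter_upwards [hroots, hdet_ne] with t ht htd
  have hNd : (N t).det = 1 := by
    simp only [N]
    rw [det_updateRow_smul, updateRow_eq_self, inv_mul_cancel₀ htd]
  refine ⟨⟨N t, hNd⟩, ?_, rfl⟩
  exact genPoly_updateRow_ne_zero i j _ _ (inv_ne_zero htd) (by rw [hev]; exact ht)

/-- for `n ≥ 3`, every continuous `H`-bi-invariant function
`f : SL(n+1, ℝ) → ℝ` satisfies `f(gᵀ) = f(g)`. -/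
theorem continuous_biinvariant_J_invariant (n : ℕ) (hn : 3 ≤ n)
    (f : Matrix.SpecialLinearGroup (Fin (n + 1)) ℝ → ℝ)
    (hfcont : Continuous f)
    (hfinv : ∀ g : Matrix.SpecialLinearGroup (Fin (n + 1)) ℝ,
      ∀ h₁ ∈ Hset n, ∀ h₂ ∈ Hset n, f (h₁ * g * h₂) = f g) :
    ∀ g : Matrix.SpecialLinearGroup (Fin (n + 1)) ℝ,
      f ⟨(g : Matrix (Fin (n + 1)) (Fin (n + 1)) ℝ)ᵀ,
          by rw [Matrix.det_transpose]; exact g.2⟩ = f g := by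
  intro g
  let i : Fin n := ⟨0, by omega⟩
  let j : Fin n := ⟨1, by omega⟩
  have hij : i ≠ j := by simp [i, j]
  have htr : Continuous fun g : Matrix.SpecialLinearGroup (Fin (n + 1)) ℝ => g.transpose :=
    Continuous.subtype_mk (continuous_subtype_val.matrix_transpose) _
  have hclosed : IsClosed {x : Matrix.SpecialLinearGroup (Fin (n + 1)) ℝ | f x.transpose = f x} :=
    isClosed_eq (hfcont.comp htr) hfcont
  exact closure_minimal (fun x hx => f_transpose_of_generic i j hij f hfinv x hx) hclosed
    (mem_closure_generic i j g)
end

section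
/- Let n ≥ 3 and let X₁ = {(x,y) ∈ ℝ^{n+1} × ℝ^{n+1} : ⟨x,y⟩ = 1}, with points written (x₁,x',y₁,y'), x',y' ∈ ℝⁿ. Suppose F : X₁ → ℝ is continuous and invariant under the action of GL⁺(n,ℝ) given by h·(x₁,x',y₁,y') = (x₁, h x', y₁, (hᵀ)⁻¹ y'). Then F is invariant under the connected component of the identity of the orthogonal group O(Q₁) of Q₁(u,v) = ⟨u,v⟩ on ℝⁿ × ℝⁿ, acting on X₁ by M·(x₁,x',y₁,y') = (x₁, u, y₁, v) where (u,v) = M(x',y'). -/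
/-!
Fix `x₁, y₁` and put `c = 1 - x₁ y₁`. Every `M ∈ O(Q₁)` preserves the fibre
`{(x', y') : ⟨x', y'⟩ = c}`, so it suffices that `F` is constant on this fibre
(`FibreInv.fibre_eq`).

* If `c ≠ 0`, the fibre is a single `GL⁺`-orbit: the shears `1 + a bᵀ` with `⟨b, a⟩ = 0` move `x'`
  (or `y'`) freely while the other vector is fixed (`shear_left`, `shear_right`), and with
  positive scalings they bring every point to `(e, c e)`, where `e` is a basis vector
  (`fibre_ne_zero`).
* If `c = 0`, the fibre splits into several orbits, but some maps scale `x'` by any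
  `t > 0` while fixing `y'`, and once `x' = 0` the scalar matrix `t⁻¹` scales `y'` by `t`. Letting `t → 0`,
  continuity gives `F(x', y') = F(0, y') = F(0, 0)` (`fibre_zero`).
-/

open Matrix

/-- Invariance of `G` under `GL⁺(n, ℝ)` on the fibre of pairs with inner product `c`. The action is
written as `(x, hᵀ y) ↦ (h x, y)`, which avoids the inverse transpose. -/
def FibreInv (n : ℕ) (c : ℝ) (G : (Fin n → ℝ) → (Fin n → ℝ) → ℝ) : Prop :=
  ∀ (h : Matrix (Fin n) (Fin n) ℝ) (x y : Fin n → ℝ), 0 < h.det → x ⬝ᵥ (hᵀ *ᵥ y) = c →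
    G (h *ᵥ x) y = G x (hᵀ *ᵥ y)

section Fibre

variable {n : ℕ} {c : ℝ} {G : (Fin n → ℝ) → (Fin n → ℝ) → ℝ}

/-- Invariance under the rank-one perturbation `1 + a bᵀ` of the identity. -/
lemma FibreInv.rankOne (hG : FibreInv n c G) (a b x y : Fin n → ℝ) (hab : 0 < 1 + b ⬝ᵥ a)
    (hc : x ⬝ᵥ (y + (a ⬝ᵥ y) • b) = c) :
    G (x + (b ⬝ᵥ x) • a) y = G x (y + (a ⬝ᵥ y) • b) := by
  have h1 : (1 + vecMulVec a b) *ᵥ x = x + (b ⬝ᵥ x) • a := by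
    rw [add_mulVec, one_mulVec, vecMulVec_mulVec]
    simp
  have h2 : (1 + vecMulVec a b)ᵀ *ᵥ y = y + (a ⬝ᵥ y) • b := by
    rw [transpose_add, transpose_one, transpose_vecMulVec, add_mulVec, one_mulVec,
      vecMulVec_mulVec]
    simp
  have h3 : (1 + vecMulVec a b).det = 1 + b ⬝ᵥ a := by
    rw [vecMulVec_eq Unit, det_one_add_replicateCol_mul_replicateRow]
  have := hG (1 + vecMulVec a b) x y (h3 ▸ hab) (by rw [h2]; exact hc)
  rwa [h1, h2] at this

lemma FibreInv.scale (hG : FibreInv n c G) (t : ℝ) (ht : 0 < t) (x y : Fin n → ℝ)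
    (hc : x ⬝ᵥ (t • y) = c) : G (t • x) y = G x (t • y) := by
  have := hG (t • 1) x y (by rw [det_smul]; simp; positivity)
    (by simpa [smul_mulVec] using hc)
  simpa [smul_mulVec] using this

lemma FibreInv.shear_left (hG : FibreInv n c G) (hc0 : c ≠ 0) (x u y : Fin n → ℝ)
    (hx : x ⬝ᵥ y = c) (hu : u ⬝ᵥ y = c) : G u y = G x y := by
  have e1 : (u - x) ⬝ᵥ y = 0 := by rw [sub_dotProduct, hx, hu, sub_self]
  have e2 : (c⁻¹ • y) ⬝ᵥ x = 1 := by
    rw [smul_dotProduct, dotProduct_comm, hx, smul_eq_mul, inv_mul_cancel₀ hc0]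
  have e3 : (c⁻¹ • y) ⬝ᵥ (u - x) = 0 := by
    rw [smul_dotProduct, dotProduct_comm, e1, smul_zero]
  have := hG.rankOne (u - x) (c⁻¹ • y) x y (by rw [e3]; norm_num) (by rw [e1]; simpa using hx)
  rw [e1, e2] at this
  simpa using this

lemma FibreInv.shear_right (hG : FibreInv n c G) (hc0 : c ≠ 0) (x y v : Fin n → ℝ)
    (hy : x ⬝ᵥ y = c) (hv : x ⬝ᵥ v = c) : G x v = G x y := by
  have e1 : (y - v) ⬝ᵥ x = 0 := by rw [dotProduct_comm, dotProduct_sub, hy, hv, sub_self]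
  have e2 : (c⁻¹ • x) ⬝ᵥ v = 1 := by
    rw [smul_dotProduct, hv, smul_eq_mul, inv_mul_cancel₀ hc0]
  have e3 : (y - v) ⬝ᵥ (c⁻¹ • x) = 0 := by rw [dotProduct_smul, e1, smul_zero]
  have := hG.rankOne (c⁻¹ • x) (y - v) x v (by rw [e3]; norm_num) (by rw [e2]; simpa using hy)
  rw [e1, e2] at this
  simpa using this

/-- For `c ≠ 0` every point of the fibre can be moved to `(eᵢ, c eᵢ)`. A second index `j` is
needed to make the `i`-th coordinate of `x` positive. -/
lemma FibreInv.fibre_ne_zero (hG : FibreInv n c G) (hc0 : c ≠ 0) (i j : Fin n) (hij : i ≠ j)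
    (x y : Fin n → ℝ) (hxy : x ⬝ᵥ y = c) :
    G x y = G (Pi.single i 1) (c • Pi.single i 1) := by
  have pos : ∀ x y : Fin n → ℝ, x ⬝ᵥ y = c → 0 < x i →
      G x y = G (Pi.single i 1) (c • Pi.single i 1) := by
    intro x y hxy hx
    have d1 : x ⬝ᵥ ((c / x i) • Pi.single i 1) = c := by
      simp [dotProduct_smul]; field_simp
    have d2 : (x i • Pi.single i (1 : ℝ)) ⬝ᵥ ((c / x i) • Pi.single i 1) = c := by
      simp [dotProduct_smul]; field_simp
    have e : x i • ((c / x i) • (Pi.single i 1 : Fin n → ℝ)) = c • Pi.single i 1 := by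
      rw [smul_smul]; congr 1; field_simp
    rw [← hG.shear_right hc0 x y _ hxy d1, ← hG.shear_left hc0 _ _ _ d1 d2,
      hG.scale _ hx _ _ (by rw [e]; simp [dotProduct_smul]), e]
  -- A nonzero `yₖ` gives a vector orthogonal to `y` along which `xᵢ` can be raised to `1`.
  have gen : ∀ (x y : Fin n → ℝ) (k : Fin n), x ⬝ᵥ y = c → i ≠ k → y k ≠ 0 →
      G x y = G (Pi.single i 1) (c • Pi.single i 1) := by
    intro x y k hxy hik hy
    let u : Fin n → ℝ :=
      x + ((1 - x i) / y k) • (y k • Pi.single i (1 : ℝ) - y i • Pi.single k (1 : ℝ))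
    have hu : u ⬝ᵥ y = c := by
      simp only [u, add_dotProduct, smul_dotProduct, sub_dotProduct, hxy, single_dotProduct,
        smul_eq_mul]
      ring
    have hui : u i = 1 := by
      simp [u, hik]; field_simp; ring
    rw [← hG.shear_left hc0 x u y hxy hu]
    exact pos u y hu (by rw [hui]; norm_num)
  by_cases hy : ∃ k, i ≠ k ∧ y k ≠ 0
  · obtain ⟨k, hik, hk⟩ := hy
    exact gen x y k hxy hik hk
  · push Not at hy
    -- Now `y` is a multiple of `eᵢ`, so `xᵢ yᵢ = c ≠ 0`, and `y` can be given a `j`-th coordinate.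
    have hxi : x i ≠ 0 := by
      intro h0
      apply hc0
      rw [← hxy]
      refine Finset.sum_eq_zero fun k _ => ?_
      by_cases hik : i = k
      · rw [← hik, h0, zero_mul]
      · rw [hy k hik, mul_zero]
    let v : Fin n → ℝ := y + (x i • Pi.single j (1 : ℝ) - x j • Pi.single i (1 : ℝ))
    have hv : x ⬝ᵥ v = c := by
      simp only [v, dotProduct_add, dotProduct_smul, dotProduct_sub, hxy, dotProduct_single,
        smul_eq_mul]
      ring
    rw [← hG.shear_right hc0 x y v hxy hv]
    exact gen x v j hv hij (by simpa [v, hij.symm, hy j hij] using hxi)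

lemma eq_at_zero_of_eq_of_pos {f : ℝ → ℝ} (hf : Continuous f) {r : ℝ}
    (h : ∀ t, 0 < t → f t = r) : f 0 = r := by
  have h1 : Filter.Tendsto f (nhdsWithin 0 (Set.Ioi 0)) (nhds (f 0)) :=
    (hf.tendsto 0).mono_left nhdsWithin_le_nhds
  refine tendsto_nhds_unique h1 (tendsto_const_nhds.congr' ?_)
  filter_upwards [self_mem_nhdsWithin] with t ht using (h t ht).symm

lemma FibreInv.fibre_zero (hG : FibreInv n 0 G)
    (hcont : ContinuousOn (fun q : (Fin n → ℝ) × (Fin n → ℝ) => G q.1 q.2)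
      {q | q.1 ⬝ᵥ q.2 = 0})
    (x y : Fin n → ℝ) (hxy : x ⬝ᵥ y = 0) : G x y = G 0 0 := by
  have hx : G 0 y = G x y := by
    by_cases hx0 : x = 0
    · rw [hx0]
    have hpos : x ⬝ᵥ x ≠ 0 := by simpa using hx0
    have hc : Continuous fun t : ℝ => G (t • x) y :=
      hcont.comp_continuous (f := fun t : ℝ => (t • x, y)) (by fun_prop)
        (fun t => by simp [smul_dotProduct, hxy])
    have := eq_at_zero_of_eq_of_pos hc (r := G x y) (fun t ht => by
      -- The map `1 + (t - 1) x xᵀ / ⟨x, x⟩` scales `x` by `t`; its transpose fixes `y ⊥ x`.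
      have e : ((x ⬝ᵥ x)⁻¹ • x) ⬝ᵥ x = 1 := by
        rw [smul_dotProduct, smul_eq_mul, inv_mul_cancel₀ hpos]
      have e2 : ((t - 1) • x) ⬝ᵥ y = 0 := by rw [smul_dotProduct, hxy, smul_zero]
      have := hG.rankOne ((t - 1) • x) ((x ⬝ᵥ x)⁻¹ • x) x y
        (by rw [dotProduct_smul, e]; simpa using ht) (by rw [e2]; simpa using hxy)
      rw [e, e2] at this
      rw [zero_smul, add_zero] at this
      rw [← this]
      congr 1
      module)
    simpa using this
  have hy : G 0 0 = G 0 y := by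
    have hc : Continuous fun t : ℝ => G 0 (t • y) :=
      hcont.comp_continuous (f := fun t : ℝ => (0, t • y)) (by fun_prop) (fun t => by simp)
    have := eq_at_zero_of_eq_of_pos hc (r := G 0 y) (fun t ht => by
      have := hG.scale t ht 0 y (by simp)
      rw [smul_zero] at this
      exact this.symm)
    simpa using this
  rw [hy, hx]

lemma FibreInv.fibre_eq (hn : 3 ≤ n) (hG : FibreInv n c G)
    (hcont : ContinuousOn (fun q : (Fin n → ℝ) × (Fin n → ℝ) => G q.1 q.2)
      {q | q.1 ⬝ᵥ q.2 = c})
    (x y u v : Fin n → ℝ) (hxy : x ⬝ᵥ y = c) (huv : u ⬝ᵥ v = c) : G u v = G x y := by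
  by_cases hc : c = 0
  · subst hc
    rw [hG.fibre_zero hcont x y hxy, hG.fibre_zero hcont u v huv]
  · have hij : (⟨0, by omega⟩ : Fin n) ≠ ⟨1, by omega⟩ := by simp
    rw [hG.fibre_ne_zero hc _ _ hij x y hxy, hG.fibre_ne_zero hc _ _ hij u v huv]

end Fibre

/-- for `n ≥ 3`, every continuous function on `X₁` invariant under
`h · (x₁, x', y₁, y') = (x₁, h x', y₁, (hᵀ)⁻¹ y')` for `h ∈ GL⁺(n, ℝ)` is invariant under
the identity component of `O(Q₁)`, acting on `X₁` by
`M · (x₁, x', y₁, y') = (x₁, u, y₁, v)` where `(u, v) = M (x', y')`. -/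
theorem continuous_invariant_extra_symmetry (n : ℕ) (hn : 3 ≤ n)
    (F : (ℝ × (Fin n → ℝ)) × (ℝ × (Fin n → ℝ)) → ℝ)
    (hFcont : ContinuousOn F (X1split n))
    (hFinv : ∀ h : Matrix (Fin n) (Fin n) ℝ, 0 < h.det → ∀ p ∈ X1split n,
      F ((p.1.1, h *ᵥ p.1.2), (p.2.1, (hᵀ)⁻¹ *ᵥ p.2.2)) = F p) :
    ∀ M ∈ connectedComponentIn (OQ1 n) 1, ∀ p ∈ X1split n,
      F ((p.1.1, fun i => (M *ᵥ Sum.elim p.1.2 p.2.2) (Sum.inl i)),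
         (p.2.1, fun i => (M *ᵥ Sum.elim p.1.2 p.2.2) (Sum.inr i))) = F p := by
  intro M hM p hp
  have hMQ := (connectedComponentIn_subset _ _ hM).2
  obtain ⟨⟨a, x⟩, ⟨b, y⟩⟩ := p
  have hp' : a * b + x ⬝ᵥ y = 1 := hp
  have hG : FibreInv n (1 - a * b) (fun x y => F ((a, x), (b, y))) := by
    intro h x y hdet hc
    have hu : IsUnit (hᵀ).det := by rw [det_transpose]; exact hdet.ne'.isUnit
    have := hFinv h hdet ((a, x), (b, hᵀ *ᵥ y)) (by
      change a * b + x ⬝ᵥ (hᵀ *ᵥ y) = 1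
      rw [hc]; ring)
    simpa [mulVec_mulVec, nonsing_inv_mul _ hu] using this
  have hcont : ContinuousOn (fun q : (Fin n → ℝ) × (Fin n → ℝ) => F ((a, q.1), (b, q.2)))
      {q | q.1 ⬝ᵥ q.2 = 1 - a * b} := by
    refine hFcont.comp (f := fun q : (Fin n → ℝ) × (Fin n → ℝ) => ((a, q.1), (b, q.2)))
      (by fun_prop) ?_
    intro q hq
    have hq' : q.1 ⬝ᵥ q.2 = 1 - a * b := hq
    change a * b + q.1 ⬝ᵥ q.2 = 1
    rw [hq']; ring
  have hQ : (fun i => (M *ᵥ Sum.elim x y) (Sum.inl i)) ⬝ᵥ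
      (fun i => (M *ᵥ Sum.elim x y) (Sum.inr i)) = x ⬝ᵥ y := hMQ (Sum.elim x y)
  exact hG.fibre_eq hn hcont x y _ _ (by linarith) (by rw [hQ]; linarith)
end
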